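/- arXiv:2205.11904 — 2 statements merged into one kernel-verified Lean document; each statement's English description precedes it below -/
import Mathlib

section
/- Let (X,T) be a topological dynamical system with a compatible metric d. Then for every ε>0 and every ergodic T-invariant Borel probability measure μ, PS_μ(T,d,6ε) ≤ R_{μ,L∞}(ε); equivalently, PS_μ(T,d,ε) ≤ R_{μ,L∞}(ε/6). -/
open Filter MeasureTheory Set
open scoped ENNReal Topology

noncomputable section

namespace MMD

variable {X : Type*}

/-- The `n`-th Bowen metric `d_n(x,y) = max_{0 ≤ j ≤ n-1} d(T^j x, T^j y)`. -/
noncomputable def bowenDist [PseudoMetricSpace X] (T : X → X) (n : ℕ) (x y : X) : ℝ :=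
  ⨆ j : Fin n, dist (T^[(j : ℕ)] x) (T^[(j : ℕ)] y)

/-- `r_n(T,d,ε,Z)`: minimal cardinality of an `(n,ε)`-spanning set of `Z`. -/
noncomputable def spanNum [PseudoMetricSpace X] (T : X → X) (n : ℕ) (ε : ℝ) (Z : Set X) : ℕ :=
  sInf {k | ∃ E : Finset X, E.card = k ∧ ∀ z ∈ Z, ∃ y ∈ E, bowenDist T n z y < ε}

/-- `s_n(T,d,ε,Z)`: maximal cardinality of an `(n,ε)`-separated subset of `Z`. -/
noncomputable def sepNum [PseudoMetricSpace X] (T : X → X) (n : ℕ) (ε : ℝ) (Z : Set X) : ℕ :=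
  sSup {k | ∃ F : Finset X, ↑F ⊆ Z ∧ F.card = k ∧
    ∀ x ∈ F, ∀ y ∈ F, x ≠ y → ε ≤ bowenDist T n x y}

/-- `limsup_{n→∞} (1/n) log r_n(T,d,ε,X)`. -/
noncomputable def spanGrowth [PseudoMetricSpace X] (T : X → X) (ε : ℝ) : ℝ≥0∞ :=
  Filter.limsup (fun n : ℕ => ENNReal.ofReal (Real.log (spanNum T n ε Set.univ)) / (n : ℝ≥0∞))
    Filter.atTop

/-- Upper metric mean dimension. -/
noncomputable def mdimMUpper [PseudoMetricSpace X] (T : X → X) : ℝ≥0∞ :=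
  Filter.limsup (fun ε : ℝ => spanGrowth T ε / ENNReal.ofReal (Real.log (1 / ε)))
    (nhdsWithin 0 (Set.Ioi 0))

/-- Lower metric mean dimension. -/
noncomputable def mdimMLower [PseudoMetricSpace X] (T : X → X) : ℝ≥0∞ :=
  Filter.liminf (fun ε : ℝ => spanGrowth T ε / ENNReal.ofReal (Real.log (1 / ε)))
    (nhdsWithin 0 (Set.Ioi 0))

/-- A finite (Borel) partition given as a finite set of measurable, pairwise disjoint sets
covering the space. -/
def IsFinPartition {Y : Type*} [MeasurableSpace Y] (P : Finset (Set Y)) : Prop :=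
  (∀ s ∈ P, MeasurableSet s) ∧ (∀ s ∈ P, ∀ t ∈ P, s ≠ t → Disjoint s t) ∧
    ⋃₀ (P : Set (Set Y)) = Set.univ

/-- Mutual information `I(ξ;η)` of two random variables, as the supremum over finite
measurable partitions of the target spaces. -/
noncomputable def mutualInfo {Ω A B : Type*} [MeasurableSpace Ω] [MeasurableSpace A]
    [MeasurableSpace B] (P : Measure Ω) (ξ : Ω → A) (η : Ω → B) : ℝ≥0∞ :=
  ⨆ (p : Finset (Set A)) (_ : IsFinPartition p) (q : Finset (Set B)) (_ : IsFinPartition q),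
    ENNReal.ofReal (∑ s ∈ p, ∑ t ∈ q,
      (P (ξ ⁻¹' s ∩ η ⁻¹' t)).toReal *
        Real.log ((P (ξ ⁻¹' s ∩ η ⁻¹' t)).toReal /
          ((P (ξ ⁻¹' s)).toReal * (P (η ⁻¹' t)).toReal)))

/-- The `L^∞` rate distortion function `R_{μ,L∞}(ε,s)`: the infimum of `I(ξ;η)/n` over all
`n ≥ 1` and all joint distributions `ν` of `(ξ, (η_0,…,η_{n-1}))` such that `ξ` has law `μ`,
the `η_k` take (almost surely) finitely many values, and
`E(#{0 ≤ k ≤ n-1 : d(T^k ξ, η_k) ≥ ε}) < s n`. -/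
noncomputable def RDistLInftyS [PseudoMetricSpace X] [MeasurableSpace X] (T : X → X)
    (μ : Measure X) (ε s : ℝ) : ℝ≥0∞ :=
  ⨅ (n : ℕ) (_ : 0 < n) (ν : Measure (X × (Fin n → X))) (_ : IsProbabilityMeasure ν)
    (_ : ν.map Prod.fst = μ) (_ : ∃ S : Finset X, ν {p | ∀ k, p.2 k ∈ S} = 1)
    (_ : ∫⁻ p, (Nat.card {k : Fin n // ε ≤ dist (T^[(k : ℕ)] p.1) (p.2 k)} : ℝ≥0∞) ∂ν
        < ENNReal.ofReal (s * n)),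
    mutualInfo ν Prod.fst Prod.snd / (n : ℝ≥0∞)

/-- `R_{μ,L∞}(ε) = lim_{s→0} R_{μ,L∞}(ε,s)` (the limit equals the supremum over `s > 0`
by monotonicity). -/
noncomputable def RDistLInfty [PseudoMetricSpace X] [MeasurableSpace X] (T : X → X)
    (μ : Measure X) (ε : ℝ) : ℝ≥0∞ :=
  ⨆ (s : ℝ) (_ : 0 < s), RDistLInftyS T μ ε s

/-- The `L¹` rate distortion function `R_{μ,1}(ε)`. -/
noncomputable def RDistL1 [PseudoMetricSpace X] [MeasurableSpace X] (T : X → X)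
    (μ : Measure X) (ε : ℝ) : ℝ≥0∞ :=
  ⨅ (n : ℕ) (_ : 0 < n) (ν : Measure (X × (Fin n → X))) (_ : IsProbabilityMeasure ν)
    (_ : ν.map Prod.fst = μ) (_ : ∃ S : Finset X, ν {p | ∀ k, p.2 k ∈ S} = 1)
    (_ : ∫⁻ p, ∑ k : Fin n, ENNReal.ofReal (dist (T^[(k : ℕ)] p.1) (p.2 k)) ∂ν
        < ENNReal.ofReal (ε * n)),
    mutualInfo ν Prod.fst Prod.snd / (n : ℝ≥0∞)

/-- `R^δ_μ(T,n,ε)`: minimal number of Bowen `(n,ε)`-balls whose union has `μ`-measure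
greater than `1 - δ`. -/
noncomputable def katokNum [PseudoMetricSpace X] [MeasurableSpace X] (T : X → X)
    (μ : Measure X) (n : ℕ) (ε δ : ℝ) : ℕ :=
  sInf {k | ∃ E : Finset X, E.card = k ∧
    ENNReal.ofReal (1 - δ) < μ (⋃ x ∈ E, {y | bowenDist T n x y < ε})}

/-- `h̄^K_μ(T,ε,δ)`. -/
noncomputable def katokUpperD [PseudoMetricSpace X] [MeasurableSpace X] (T : X → X)
    (μ : Measure X) (ε δ : ℝ) : ℝ≥0∞ :=
  Filter.limsup (fun n : ℕ => ENNReal.ofReal (Real.log (katokNum T μ n ε δ)) / (n : ℝ≥0∞))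
    Filter.atTop

/-- `ḥ^K_μ(T,ε,δ)`. -/
noncomputable def katokLowerD [PseudoMetricSpace X] [MeasurableSpace X] (T : X → X)
    (μ : Measure X) (ε δ : ℝ) : ℝ≥0∞ :=
  Filter.liminf (fun n : ℕ => ENNReal.ofReal (Real.log (katokNum T μ n ε δ)) / (n : ℝ≥0∞))
    Filter.atTop

/-- `h̄^K_μ(T,ε) = lim_{δ→0} h̄^K_μ(T,ε,δ)` (equal to the supremum over `δ ∈ (0,1)` by
monotonicity). -/
noncomputable def katokUpper [PseudoMetricSpace X] [MeasurableSpace X] (T : X → X)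
    (μ : Measure X) (ε : ℝ) : ℝ≥0∞ :=
  ⨆ (δ : ℝ) (_ : δ ∈ Set.Ioo (0 : ℝ) 1), katokUpperD T μ ε δ

/-- `ḥ^K_μ(T,ε) = lim_{δ→0} ḥ^K_μ(T,ε,δ)`. -/
noncomputable def katokLower [PseudoMetricSpace X] [MeasurableSpace X] (T : X → X)
    (μ : Measure X) (ε : ℝ) : ℝ≥0∞ :=
  ⨆ (δ : ℝ) (_ : δ ∈ Set.Ioo (0 : ℝ) 1), katokLowerD T μ ε δ

/-- The empirical measure `(1/n) Σ_{j=0}^{n-1} δ_{T^j x}`. -/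
noncomputable def empMeas [MeasurableSpace X] (T : X → X) (n : ℕ) (x : X) : Measure X :=
  (n : ℝ≥0∞)⁻¹ • ∑ j ∈ Finset.range n, Measure.dirac (T^[j] x)

/-- Pfister–Sullivan entropy `PS_μ(T,d,ε)`: infimum over weak* open neighborhoods `F` of `μ`
of `limsup_n (1/n) log s_n(T,d,ε,X_{n,F})`, where
`X_{n,F} = {x : (1/n) Σ_{j<n} δ_{T^j x} ∈ F}`. -/
noncomputable def PSent [MetricSpace X] [MeasurableSpace X] [OpensMeasurableSpace X]
    (T : X → X) (μ : ProbabilityMeasure X) (ε : ℝ) : ℝ≥0∞ :=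
  ⨅ (F : Set (ProbabilityMeasure X)) (_ : IsOpen F) (_ : μ ∈ F),
    Filter.limsup (fun n : ℕ => ENNReal.ofReal (Real.log (sepNum T n ε
      {x : X | ∃ h : IsProbabilityMeasure (empMeas T n x),
        (⟨empMeas T n x, h⟩ : ProbabilityMeasure X) ∈ F})) / (n : ℝ≥0∞)) Filter.atTop

/-- Partition entropy `H_μ(P) = Σ_{A∈P} -μ(A) log μ(A)`. -/
noncomputable def entP [MeasurableSpace X] (μ : Measure X) (P : Finset (Set X)) : ℝ≥0∞ :=
  ∑ A ∈ P, ENNReal.ofReal (-((μ A).toReal * Real.log ((μ A).toReal)))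

/-- The join `P^n = ∨_{j=0}^{n-1} T^{-j} P`. -/
noncomputable def joinN (T : X → X) (P : Finset (Set X)) (n : ℕ) : Finset (Set X) :=
  letI : DecidableEq (Set X) := Classical.decEq _
  (Fintype.piFinset (fun _ : Fin n => P)).image (fun f => ⋂ j : Fin n, T^[(j : ℕ)] ⁻¹' f j)

/-- `h_μ(T,P) = lim_n H_μ(P^n)/n` (the limit exists and equals the liminf). -/
noncomputable def entRate [MeasurableSpace X] (T : X → X) (μ : Measure X)
    (P : Finset (Set X)) : ℝ≥0∞ :=
  Filter.liminf (fun n : ℕ => entP μ (joinN T P n) / (n : ℝ≥0∞)) Filter.atTop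

/-- `inf { h_μ(T,P) : P a finite Borel partition with diam P ≤ ε }`. -/
noncomputable def infEntRate [PseudoMetricSpace X] [MeasurableSpace X] (T : X → X)
    (μ : Measure X) (ε : ℝ) : ℝ≥0∞ :=
  ⨅ (P : Finset (Set X)) (_ : IsFinPartition P) (_ : ∀ s ∈ P, Metric.diam s ≤ ε),
    entRate T μ P

/-- Kolmogorov–Sinai entropy `h_μ(T)`. -/
noncomputable def ksEntropy [MeasurableSpace X] (T : X → X) (μ : Measure X) : ℝ≥0∞ :=
  ⨆ (P : Finset (Set X)) (_ : IsFinPartition P), entRate T μ P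

/-- A finite open cover. -/
def IsFinOpenCover [TopologicalSpace X] (α : Finset (Set X)) : Prop :=
  (∀ A ∈ α, IsOpen A) ∧ ⋃₀ (α : Set (Set X)) = Set.univ

/-- `ord(β) = max_x #{B ∈ β : x ∈ B} - 1`. -/
noncomputable def ordCover (β : Finset (Set X)) : ℕ :=
  sSup {k | ∃ x : X, Nat.card {B : Set X // B ∈ β ∧ x ∈ B} = k} - 1

/-- `D(α) = min_{β ≻ α} ord(β)`, over finite open covers `β` refining `α`. -/
noncomputable def Dcover [TopologicalSpace X] (α : Finset (Set X)) : ℕ :=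
  sInf {k | ∃ β : Finset (Set X), IsFinOpenCover β ∧ (∀ B ∈ β, ∃ A ∈ α, B ⊆ A) ∧
    ordCover β = k}

/-- Mean (topological) dimension `mdim(X,T) = sup_α lim_n D(α^n)/n`. -/
noncomputable def mdimTop [TopologicalSpace X] (T : X → X) : ℝ≥0∞ :=
  ⨆ (α : Finset (Set X)) (_ : IsFinOpenCover α),
    Filter.liminf (fun n : ℕ => (Dcover (joinN T α n) : ℝ≥0∞) / (n : ℝ≥0∞)) Filter.atTop

/-- The marker property for a homeomorphism. -/
def MarkerProperty [TopologicalSpace X] (T : X ≃ₜ X) : Prop :=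
  ∀ N : ℕ, 0 < N → ∃ U : Set X, IsOpen U ∧
    (∀ n : ℕ, 1 ≤ n → n ≤ N → U ∩ (⇑T)^[n] '' U = ∅) ∧
    ⋃ n : ℤ, ⇑(T.toEquiv ^ n) '' U = Set.univ

/-- Upper dimension `limsup_{ε→0} F(μ,ε)/log(1/ε)` associated with a candidate `F`. -/
noncomputable def dimFUpper [MeasurableSpace X] (F : Measure X → ℝ → ℝ≥0∞)
    (μ : Measure X) : ℝ≥0∞ :=
  Filter.limsup (fun ε : ℝ => F μ ε / ENNReal.ofReal (Real.log (1 / ε)))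
    (nhdsWithin 0 (Set.Ioi 0))

/-- Lower dimension `liminf_{ε→0} F(μ,ε)/log(1/ε)` associated with a candidate `F`. -/
noncomputable def dimFLower [MeasurableSpace X] (F : Measure X → ℝ → ℝ≥0∞)
    (μ : Measure X) : ℝ≥0∞ :=
  Filter.liminf (fun ε : ℝ => F μ ε / ENNReal.ofReal (Real.log (1 / ε)))
    (nhdsWithin 0 (Set.Ioi 0))

/-- A candidate function: for each invariant probability measure `μ`, `F(μ,·)` is
non-decreasing as `ε` decreases, and `F(μ,ε) → h_μ(T)` as `ε → 0⁺`. -/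
def IsCandidate [MeasurableSpace X] (T : X → X) (F : Measure X → ℝ → ℝ≥0∞) : Prop :=
  ∀ μ : Measure X, IsProbabilityMeasure μ → MeasurePreserving T μ μ →
    (∀ ε₁ ε₂ : ℝ, 0 < ε₁ → ε₁ ≤ ε₂ → F μ ε₂ ≤ F μ ε₁) ∧
    Filter.Tendsto (F μ) (nhdsWithin 0 (Set.Ioi 0)) (nhds (ksEntropy T μ))

end MMD

open MMD
lemma aux_gibbs {U : Type*} [Fintype U] (lam N b : U → ℝ) (m : ℝ) (hl : ∀ u, 0 ≤ lam u)
    (hl1 : ∑ u, lam u = 1) (hN : ∀ u, 0 ≤ N u) (hNm : ∑ u, N u = m)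
    (hNl : ∀ u, N u ≤ lam u) :
    -(∑ u, N u * Real.log (N u / (m * lam u))) - ∑ u, N u * b u ≤
      m * Real.log (∑ u, lam u * Real.exp (-b u)) := by
  set W := ∑ u, lam u * Real.exp (-b u) with hW
  have hWpos : 0 < W := by
    have : ∃ u, 0 < lam u := by
      by_contra! h
      have := Finset.sum_nonpos (s := Finset.univ) (fun u _ => h u)
      linarith
    obtain ⟨u, hu⟩ := this
    exact Finset.sum_pos' (fun u _ => mul_nonneg (hl u) (Real.exp_pos _).le)
      ⟨u, Finset.mem_univ _, by positivity⟩
  have key : ∀ u, -(N u * Real.log (N u / (m * lam u))) - N u * b u - N u * Real.log W ≤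
      m / W * (lam u * Real.exp (-b u)) - N u := by
    intro u
    have hm : 0 ≤ m := hNm ▸ Finset.sum_nonneg (fun u _ => hN u)
    rcases (hN u).eq_or_lt with h | h
    · rw [← h]; simp
      have := hl u
      positivity
    · have hlu : 0 < lam u := lt_of_lt_of_le h (hNl u)
      have hmu : 0 < m := by
        rw [← hNm]
        exact Finset.sum_pos' (fun u _ => hN u) ⟨u, Finset.mem_univ _, h⟩
      have e1 : Real.log (m / W * (lam u * Real.exp (-b u)) / N u) =
          -Real.log (N u / (m * lam u)) - b u - Real.log W := by
        rw [Real.log_div (by positivity) (by positivity), Real.log_mul (by positivity) (by positivity),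
          Real.log_div (by positivity) (by positivity), Real.log_mul (by positivity) (by positivity),
          Real.log_exp,
          Real.log_div (by positivity) (by positivity), Real.log_mul (by positivity) (by positivity)]
        ring
      have e2 := Real.log_le_sub_one_of_pos (x := m / W * (lam u * Real.exp (-b u)) / N u)
        (by positivity)
      rw [e1] at e2
      have e3 := mul_le_mul_of_nonneg_left e2 h.le
      have e4 : N u * (m / W * (lam u * Real.exp (-b u)) / N u - 1) =
          m / W * (lam u * Real.exp (-b u)) - N u := by field_simp
      rw [e4] at e3
      linarith
  have := Finset.sum_le_sum (s := Finset.univ) (fun u _ => key u)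
  simp only [Finset.sum_sub_distrib, Finset.sum_neg_distrib, ← Finset.mul_sum,
    ← Finset.sum_mul, hNm, ← hW] at this
  rw [div_mul_cancel₀ _ hWpos.ne'] at this
  linarith

lemma aux_expand {ι U X : Type*} [Fintype U] (lam : U → ℝ) (hl : ∀ u, 0 ≤ lam u)
    (hl1 : ∑ u, lam u = 1) (e : ι → U → X → ℝ) (E : Finset X) [DecidableEq ι]
    (K : Finset ι) (a : X → ℝ) :
    ∃ v : ι → U, ∑ x ∈ E, a x * ∏ k ∈ K, ∑ u, lam u * e k u x ≤
      ∑ x ∈ E, a x * ∏ k ∈ K, e k (v k) x := by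
  have hne : Nonempty U := by
    by_contra h
    rw [not_nonempty_iff] at h
    simp at hl1
  induction K using Finset.induction_on generalizing a with
  | empty => exact ⟨fun _ => hne.some, by simp⟩
  | insert k K hk ih =>
    obtain ⟨v, hv⟩ := ih (fun x => a x * ∑ u, lam u * e k u x)
    obtain ⟨u0, hu0⟩ := Finite.exists_max
      (fun u => ∑ x ∈ E, a x * e k u x * ∏ k ∈ K, e k (v k) x)
    refine ⟨Function.update v k u0, ?_⟩
    have h1 : ∀ x, ∏ j ∈ insert k K, e j (Function.update v k u0 j) x =
        e k u0 x * ∏ k ∈ K, e k (v k) x := by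
      intro x
      rw [Finset.prod_insert hk, Function.update_self]
      congr 1
      refine Finset.prod_congr rfl fun j hj => ?_
      rw [Function.update_of_ne (by rintro rfl; exact hk hj)]
    simp only [h1, Finset.prod_insert hk, ← mul_assoc]
    refine hv.trans ?_
    calc _ = ∑ u, lam u * ∑ x ∈ E, a x * e k u x * ∏ k ∈ K, e k (v k) x := by
          simp only [Finset.mul_sum, Finset.sum_mul]
          rw [Finset.sum_comm]
          refine Finset.sum_congr rfl fun u _ => Finset.sum_congr rfl fun x _ => ?_
          ring
      _ ≤ ∑ u, lam u * ∑ x ∈ E, a x * e k u0 x * ∏ k ∈ K, e k (v k) x :=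
          Finset.sum_le_sum fun u _ => mul_le_mul_of_nonneg_left (hu0 u) (hl u)
      _ = _ := by rw [← Finset.sum_mul, hl1, one_mul]

lemma aux_info {X : Type*} [MetricSpace X] [CompactSpace X] [MeasurableSpace X] [BorelSpace X]
    (T : X → X) (hT : Continuous T) (ε β : ℝ)
    (n : ℕ) (ν : Measure (X × (Fin n → X))) [IsProbabilityMeasure ν]
    (S : Finset X) (hS : ν {p | ∀ k, p.2 k ∈ S} = 1) (hβ : 0 ≤ β)
    (D : ℝ≥0∞) (hD : D ≠ ∞)
    (hd : ∫⁻ p, (Nat.card {k : Fin n // ε ≤ dist (T^[(k : ℕ)] p.1) (p.2 k)} : ℝ≥0∞) ∂ν ≤ D)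
    (hI : mutualInfo ν Prod.fst Prod.snd ≠ ∞) :
    ∑ u : Fin n → S, (ν (Prod.snd ⁻¹' {fun k => (u k : X)})).toReal = 1 ∧
    Integrable (fun z => Real.log (∑ u : Fin n → S,
      (ν (Prod.snd ⁻¹' {fun k => (u k : X)})).toReal *
        Real.exp (-(β * Nat.card {k : Fin n // ε ≤ dist (T^[(k : ℕ)] z) (u k)}))))
        (ν.map Prod.fst) ∧ 
    -(mutualInfo ν Prod.fst Prod.snd).toReal - β * D.toReal ≤
    ∫ z, Real.log (∑ u : Fin n → S,
      (ν (Prod.snd ⁻¹' {fun k => (u k : X)})).toReal *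
        Real.exp (-(β * Nat.card {k : Fin n // ε ≤ dist (T^[(k : ℕ)] z) (u k)})))
        ∂(ν.map Prod.fst) := by
  classical
  let c : (Fin n → S) → (Fin n → X) := fun u k => (u k : X)
  have hc : Function.Injective c := by
    intro u v h
    funext k
    exact Subtype.ext (congrFun h k)
  let g : X → (Fin n × S → Prop) := fun z q => ε ≤ dist (T^[(q.1 : ℕ)] z) q.2
  let B : (Fin n × S → Prop) → (Fin n → S) → ℕ := fun γ u => Nat.card {k : Fin n // γ (k, u k)}
  have hg : Measurable g := by
    refine measurable_pi_iff.2 fun q => ?_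
    refine measurableSet_setOfPred.1 ?_
    exact (isClosed_le continuous_const ((hT.iterate _).dist continuous_const)).measurableSet
  let A : (Fin n × S → Prop) → Set X := fun γ => g ⁻¹' {γ}
  have hA : ∀ γ, MeasurableSet (A γ) := fun γ => hg (measurableSet_singleton _)
  let C : Set (Fin n → X) := (Set.range c)ᶜ
  have hC : MeasurableSet C := (Set.finite_range c).measurableSet.compl
  have hCS : Set.range c = {y | ∀ k, y k ∈ S} := by
    ext y
    constructor
    · rintro ⟨u, rfl⟩ k
      exact (u k).2
    · intro h
      exact ⟨fun k => ⟨y k, h k⟩, rfl⟩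
  have hC0 : ν (Prod.snd ⁻¹' C) = 0 := by
    have : Prod.snd ⁻¹' C = ({p : X × (Fin n → X) | ∀ k, p.2 k ∈ S})ᶜ := by
      simp only [C, hCS]; rfl
    rw [this, prob_compl_eq_zero_iff]
    · exact hS
    · have : MeasurableSet (Set.range c) := (Set.finite_range c).measurableSet
      rw [hCS] at this
      exact measurable_snd this
  let lam : (Fin n → S) → ℝ := fun u => (ν (Prod.snd ⁻¹' {c u})).toReal
  let m : (Fin n × S → Prop) → ℝ := fun γ => (ν (Prod.fst ⁻¹' (A γ))).toReal
  let N : (Fin n × S → Prop) → (Fin n → S) → ℝ :=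
    fun γ u => (ν (Prod.fst ⁻¹' (A γ) ∩ Prod.snd ⁻¹' {c u})).toReal
  have hms : ∀ u, MeasurableSet (Prod.snd ⁻¹' {c u} : Set (X × (Fin n → X))) := fun u =>
    measurable_snd (measurableSet_singleton _)
  have hdisj : Pairwise (Function.onFun Disjoint
      (fun u => (Prod.snd ⁻¹' {c u} : Set (X × (Fin n → X))))) := by
    intro u v huv
    refine Disjoint.preimage _ ?_
    rw [Set.disjoint_singleton]
    exact fun h => huv (hc h)
  -- decomposition
  have hdec : ∀ Z : Set (X × (Fin n → X)), MeasurableSet Z →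
      ∑ u, (ν (Z ∩ Prod.snd ⁻¹' {c u})).toReal = (ν Z).toReal := by
    intro Z hZ
    rw [← ENNReal.toReal_sum (fun _ _ => measure_ne_top _ _)]
    congr 1
    have h1 := measure_biUnion_finset (μ := ν) (s := Finset.univ)
      (f := fun u => Z ∩ Prod.snd ⁻¹' {c u})
      (fun u _ v _ huv => (hdisj huv).mono Set.inter_subset_right Set.inter_subset_right)
      (fun u _ => hZ.inter (hms u))
    rw [← h1]
    refine le_antisymm (measure_mono (by simp)) ?_
    calc ν Z ≤ ν ((⋃ u ∈ Finset.univ, Z ∩ Prod.snd ⁻¹' {c u}) ∪ Prod.snd ⁻¹' C) := by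
          refine measure_mono fun p hp => ?_
          by_cases h : p.2 ∈ C
          · exact Or.inr h
          · left
            simp only [C, Set.mem_compl_iff, not_not] at h
            obtain ⟨u, hu⟩ := h
            simp only [Set.mem_iUnion]
            exact ⟨u, Finset.mem_univ _, hp, hu.symm⟩
      _ ≤ _ := (measure_union_le _ _).trans (by rw [hC0, add_zero])
  have hl1 : ∑ u, lam u = 1 := by
    have := hdec Set.univ MeasurableSet.univ
    simpa [lam] using this
  have hNm : ∀ γ, ∑ u, N γ u = m γ := fun γ => hdec _ (measurable_fst (hA γ))
  have hNl : ∀ γ u, N γ u ≤ lam u := fun γ u =>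
    ENNReal.toReal_mono (measure_ne_top _ _) (measure_mono Set.inter_subset_right)
  let Φ : (Fin n × S → Prop) → ℝ := fun γ => Real.log (∑ u, lam u * Real.exp (-(β * B γ u)))
  have hint : Integrable (fun z => Φ (g z)) (ν.map Prod.fst) := by
    have : IsProbabilityMeasure (ν.map Prod.fst) :=
      Measure.isProbabilityMeasure_map measurable_fst.aemeasurable
    have h2 : Measurable Φ := measurable_of_finite Φ
    obtain ⟨K, hK⟩ := (Set.finite_range (fun γ => ‖Φ γ‖)).bddAbove
    refine Integrable.of_bound (h2.comp hg).aestronglyMeasurable K (ae_of_all _ fun z => hK ⟨_, rfl⟩)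
  have hintval : ∫ z, Φ (g z) ∂(ν.map Prod.fst) = ∑ γ, m γ * Φ γ := by
    have h3 := integral_map (μ := ν.map Prod.fst) hg.aemeasurable (f := Φ)
      (measurable_of_finite Φ).aestronglyMeasurable
    have : IsProbabilityMeasure (ν.map Prod.fst) :=
      Measure.isProbabilityMeasure_map measurable_fst.aemeasurable
    have : IsProbabilityMeasure ((ν.map Prod.fst).map g) :=
      Measure.isProbabilityMeasure_map hg.aemeasurable
    rw [← h3, integral_fintype Integrable.of_finite]
    refine Finset.sum_congr rfl fun γ _ => ?_
    rw [smul_eq_mul, measureReal_def, Measure.map_apply hg (measurableSet_singleton _),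
      Measure.map_apply measurable_fst (hA γ)]
  refine ⟨hl1, hint, ?_⟩
  change _ ≤ ∫ z, Φ (g z) ∂(ν.map Prod.fst)
  rw [hintval]
  -- distortion
  have hdist : ∑ γ, ∑ u, N γ u * B γ u ≤ D.toReal := by
    have e1 : ∑ γ, ∑ u, N γ u * B γ u = (∑ q : (Fin n × S → Prop) × (Fin n → S),
        ν (Prod.fst ⁻¹' (A q.1) ∩ Prod.snd ⁻¹' {c q.2}) * (B q.1 q.2 : ℝ≥0∞)).toReal := by
      rw [ENNReal.toReal_sum (fun _ _ => ENNReal.mul_ne_top (measure_ne_top _ _) (by simp)),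
        Fintype.sum_prod_type]
      simp [N]
    rw [e1]
    refine ENNReal.toReal_mono hD (le_trans ?_ hd)
    have e2 : ∀ q : (Fin n × S → Prop) × (Fin n → S),
        ν (Prod.fst ⁻¹' (A q.1) ∩ Prod.snd ⁻¹' {c q.2}) * (B q.1 q.2 : ℝ≥0∞) =
        ∫⁻ p in Prod.fst ⁻¹' (A q.1) ∩ Prod.snd ⁻¹' {c q.2},
        (Nat.card {k : Fin n // ε ≤ dist (T^[(k : ℕ)] p.1) (p.2 k)} : ℝ≥0∞) ∂ν := by
      rintro ⟨γ, u⟩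
      rw [setLIntegral_congr_fun ((measurable_fst (hA γ)).inter (hms u))
        (g := fun _ => (B γ u : ℝ≥0∞))]
      · rw [setLIntegral_const, mul_comm]
      · rintro ⟨z, y⟩ ⟨h1, h2⟩
        have h1' : g z = γ := h1
        have h2' : y = c u := h2
        subst h1' h2'
        rfl
    simp only [e2]
    rw [← lintegral_biUnion_finset (s := Finset.univ)]
    · exact setLIntegral_le_lintegral _ _
    · rintro ⟨γ, u⟩ _ ⟨γ', u'⟩ _ hne
      refine Set.disjoint_left.2 ?_
      rintro ⟨z, y⟩ ⟨h1, h2⟩ ⟨h3, h4⟩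
      have h1' : g z = γ := h1
      have h2' : y = c u := h2
      have h3' : g z = γ' := h3
      have h4' : y = c u' := h4
      exact hne (Prod.ext (h1'.symm.trans h3') (hc (h2'.symm.trans h4')))
    · rintro ⟨γ, u⟩ _
      exact (measurable_fst (hA γ)).inter (hms u)
  -- information
  have hinfo : ∑ γ, ∑ u, N γ u * Real.log (N γ u / (m γ * lam u)) ≤
      (mutualInfo ν Prod.fst Prod.snd).toReal := by
    let R : Finset (Fin n × S → Prop) := Finset.univ.filter (fun γ => ∃ z, g z = γ)
    let p : Finset (Set X) := R.image A
    let q : Finset (Set (Fin n → X)) := insert C (Finset.univ.image (fun u => {c u}))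
    have hp : IsFinPartition p := by
      refine ⟨?_, ?_, ?_⟩
      · intro s hs
        obtain ⟨γ, -, rfl⟩ := Finset.mem_image.1 hs
        exact hA γ
      · intro s hs t ht hst
        obtain ⟨γ, -, rfl⟩ := Finset.mem_image.1 hs
        obtain ⟨γ', -, rfl⟩ := Finset.mem_image.1 ht
        refine Disjoint.preimage _ ?_
        rw [Set.disjoint_singleton]
        rintro rfl
        exact hst rfl
      · refine Set.eq_univ_of_forall fun z => Set.mem_sUnion.2 ⟨A (g z), ?_, rfl⟩
        exact Finset.mem_coe.2 (Finset.mem_image.2 ⟨g z, by simp [R], rfl⟩)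
    have hq : IsFinPartition q := by
      refine ⟨?_, ?_, ?_⟩
      · intro s hs
        rcases Finset.mem_insert.1 hs with rfl | hs
        · exact hC
        · obtain ⟨u, -, rfl⟩ := Finset.mem_image.1 hs
          exact measurableSet_singleton _
      · intro s hs t ht hst
        rcases Finset.mem_insert.1 hs with rfl | hs
        · rcases Finset.mem_insert.1 ht with rfl | ht
          · exact absurd rfl hst
          · obtain ⟨u, -, rfl⟩ := Finset.mem_image.1 ht
            rw [Set.disjoint_singleton_right]
            exact fun h => h ⟨u, rfl⟩
        · obtain ⟨u, -, rfl⟩ := Finset.mem_image.1 hs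
          rcases Finset.mem_insert.1 ht with rfl | ht
          · rw [Set.disjoint_singleton_left]
            exact fun h => h ⟨u, rfl⟩
          · obtain ⟨v, -, rfl⟩ := Finset.mem_image.1 ht
            rw [Set.disjoint_singleton]
            intro h
            exact hst (by rw [h])
      · refine Set.eq_univ_of_forall fun y => ?_
        by_cases h : y ∈ C
        · exact Set.mem_sUnion.2 ⟨C, by simp [q], h⟩
        · simp only [C, Set.mem_compl_iff, not_not] at h
          obtain ⟨u, rfl⟩ := h
          exact Set.mem_sUnion.2 ⟨{c u}, by simp [q], rfl⟩
    have hle : ENNReal.ofReal (∑ s ∈ p, ∑ t ∈ q,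
      (ν (Prod.fst ⁻¹' s ∩ Prod.snd ⁻¹' t)).toReal *
        Real.log ((ν (Prod.fst ⁻¹' s ∩ Prod.snd ⁻¹' t)).toReal /
          ((ν (Prod.fst ⁻¹' s)).toReal * (ν (Prod.snd ⁻¹' t)).toReal))) ≤
        mutualInfo ν Prod.fst Prod.snd := by
      unfold mutualInfo
      exact le_iSup₂_of_le p hp (le_iSup₂_of_le q hq le_rfl)
    rw [ENNReal.ofReal_le_iff_le_toReal hI] at hle
    refine le_trans (le_of_eq ?_) hle
    have hqs : ∀ F : Set (Fin n → X) → ℝ, F C = 0 → ∑ t ∈ q, F t = ∑ u, F {c u} := by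
      intro F hF
      rw [Finset.sum_insert_zero hF, Finset.sum_image]
      intro u _ v _ h
      exact hc (Set.singleton_injective h)
    have hps : ∀ F : Set X → ℝ, F ∅ = 0 → ∑ t ∈ p, F t = ∑ γ, F (A γ) := by
      intro F hF
      rw [Finset.sum_image, Finset.sum_filter]
      · refine Finset.sum_congr rfl fun γ _ => ?_
        split_ifs with h
        · rfl
        · rw [show A γ = ∅ from Set.eq_empty_of_forall_notMem fun z hz => h ⟨z, hz⟩, hF]
      · intro γ hγ γ' hγ' h
        obtain ⟨z, hz⟩ := (Finset.mem_filter.1 hγ).2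
        have : z ∈ A γ' := by
          change A γ = A γ' at h
          rw [← h]
          exact hz
        exact hz.symm.trans this
    rw [hps]
    · refine Finset.sum_congr rfl fun γ _ => ?_
      rw [hqs]
      have : ν (Prod.fst ⁻¹' A γ ∩ Prod.snd ⁻¹' C) = 0 :=
        measure_mono_null Set.inter_subset_right hC0
      simp [this]
    · simp
  have hgib : ∀ γ, _ := fun γ => aux_gibbs lam (N γ) (fun u => β * B γ u) (m γ)
    (fun u => ENNReal.toReal_nonneg) hl1 (fun u => ENNReal.toReal_nonneg) (hNm γ) (hNl γ)
  have hsum := Finset.sum_le_sum (s := Finset.univ) (fun γ _ => hgib γ)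
  simp only [Finset.sum_sub_distrib, Finset.sum_neg_distrib] at hsum
  have e5 : ∑ γ, ∑ u, N γ u * (β * B γ u) = β * ∑ γ, ∑ u, N γ u * B γ u := by
    simp only [Finset.mul_sum]
    refine Finset.sum_congr rfl fun γ _ => Finset.sum_congr rfl fun u _ => by ring
  rw [e5] at hsum
  have := mul_le_mul_of_nonneg_left hdist hβ
  change _ ≤ ∑ γ, m γ * Real.log (∑ u, lam u * Real.exp (-(β * B γ u)))
  linarith

lemma aux_count {X : Type*} [MetricSpace X] (T : X → X) (n : ℕ) (hn : 0 < n)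
    {U : Type*} [Fintype U] (pt : U → Fin n → X) (lam : U → ℝ) (hl : ∀ u, 0 ≤ lam u)
    (hl1 : ∑ u, lam u = 1) (ε β : ℝ) (hε : 0 < ε) (hβ : 0 ≤ β) (φ : ℝ → ℝ) (hφ0 : ∀ t, 0 ≤ φ t)
    (hφ1 : ∀ t, 2 * ε ≤ t → 1 ≤ φ t) (M : ℕ) (cell : X → Fin M)
    (hcell : ∀ x y, cell x = cell y → dist x y < 6 * ε) (N : ℕ) (hN : 0 < N) (E : Finset X)
    (hE : ∀ x ∈ E, ∀ y ∈ E, x ≠ y → 6 * ε ≤ bowenDist T N x y) (r : ℕ) (hr : r < n) :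
    ∑ x ∈ E, ∏ k ∈ (Finset.range N).filter (fun k => k % n = r),
      (∑ u, lam u * Real.exp (-(β * ∑ l : Fin n, φ (dist (T^[(l : ℕ)] (T^[k] x)) (pt u l))))) ≤
    (M : ℝ) ^ n * (1 + M * Real.exp (-β)) ^ (N + n) := by
  classical
  set K := (Finset.range N).filter (fun k => k % n = r) with hK
  obtain ⟨v, hv⟩ := aux_expand lam hl hl1
    (fun (k : ℕ) u x => Real.exp (-(β * ∑ l : Fin n, φ (dist (T^[(l : ℕ)] (T^[k] x)) (pt u l)))))
    E K (fun _ => 1)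
  simp only [one_mul] at hv
  refine hv.trans ?_
  let cl : X → (K × Fin n → Option (Fin M)) × (Fin n → Fin M) := fun x =>
    (fun q => if dist (T^[(q.2 : ℕ)] (T^[(q.1 : ℕ)] x)) (pt (v q.1) q.2) < 2 * ε then none
      else some (cell (T^[(q.2 : ℕ)] (T^[(q.1 : ℕ)] x))), fun i => cell (T^[(i : ℕ)] x))
  let a : Option (Fin M) → ℝ := fun o => o.elim 1 (fun _ => Real.exp (-β))
  have ha : ∀ o, 0 ≤ a o := by
    rintro (_ | _)
    · exact zero_le_one
    · exact (Real.exp_pos _).le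
  have hclose : ∀ x y, cl x = cl y → ∀ i < N, dist (T^[i] x) (T^[i] y) < 6 * ε := by
    intro x y hxy i hi
    by_cases hin : i < n
    · exact hcell _ _ (congrFun (congrArg Prod.snd hxy) ⟨i, hin⟩)
    · push Not at hin
      have hlt : (i - r) % n < n := Nat.mod_lt _ hn
      have hdm := Nat.div_add_mod (i - r) n
      have hki : i = (i - r) % n + (r + n * ((i - r) / n)) := by omega
      have hkK : r + n * ((i - r) / n) ∈ K := by
        rw [hK, Finset.mem_filter, Finset.mem_range]
        refine ⟨by omega, ?_⟩
        rw [Nat.add_mul_mod_self_left, Nat.mod_eq_of_lt hr]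
      have h := congrFun (congrArg Prod.fst hxy) (⟨_, hkK⟩, ⟨_, hlt⟩)
      simp only [cl, ← Function.iterate_add_apply, ← hki] at h
      split_ifs at h with h1 h2 h2
      · have := dist_triangle_right (T^[i] x) (T^[i] y)
          (pt (v (r + n * ((i - r) / n))) ⟨(i - r) % n, hlt⟩)
        linarith
      · exact hcell _ _ (Option.some.inj h)
  have hinj : Set.InjOn cl E := by
    intro x hx y hy hxy
    by_contra hne
    have h1 := hE x hx y hy hne
    have : Nonempty (Fin N) := ⟨⟨0, hN⟩⟩
    obtain ⟨j, hj⟩ := Finite.exists_max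
      (fun j : Fin N => dist (T^[(j : ℕ)] x) (T^[(j : ℕ)] y))
    have h2 : bowenDist T N x y ≤ dist (T^[(j : ℕ)] x) (T^[(j : ℕ)] y) := ciSup_le hj
    have := hclose x y hxy j j.2
    linarith
  let h : (K × Fin n → Option (Fin M)) × (Fin n → Fin M) → ℝ := fun c => ∏ q, a (c.1 q)
  have hh : ∀ c, 0 ≤ h c := fun c => Finset.prod_nonneg fun q _ => ha _
  have hpt : ∀ x, ∏ k ∈ K, Real.exp (-(β * ∑ l : Fin n,
      φ (dist (T^[(l : ℕ)] (T^[k] x)) (pt (v k) l)))) ≤ h (cl x) := by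
    intro x
    simp only [h]
    rw [Fintype.prod_prod_type, ← Finset.prod_coe_sort]
    refine Finset.prod_le_prod (fun _ _ => (Real.exp_pos _).le) fun k _ => ?_
    rw [Finset.mul_sum, ← Finset.sum_neg_distrib, Real.exp_sum]
    refine Finset.prod_le_prod (fun _ _ => (Real.exp_pos _).le) fun l _ => ?_
    simp only [cl]
    split_ifs with h1
    · simp only [a, Option.elim]
      rw [Real.exp_le_one_iff]
      have := mul_nonneg hβ (hφ0 (dist (T^[(l : ℕ)] (T^[(k : ℕ)] x)) (pt (v k) l)))
      linarith
    · simp only [a, Option.elim]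
      rw [Real.exp_le_exp]
      have := mul_le_mul_of_nonneg_left (hφ1 _ (not_lt.1 h1)) hβ
      linarith
  have hcardK : K.card * n ≤ N + n := by
    have : K.card ≤ (Finset.range (N / n + 1)).card := by
      refine Finset.card_le_card_of_injOn (fun k => k / n) ?_ ?_
      · intro k hk
        simp only [hK, Finset.coe_filter, Finset.mem_range, Set.mem_ofPred_eq] at hk
        simp only [Finset.coe_range, Set.mem_Iio]
        exact Nat.lt_succ_of_le (Nat.div_le_div_right hk.1.le)
      · intro k hk k' hk' hkk
        simp only [hK, Finset.coe_filter, Finset.mem_range, Set.mem_ofPred_eq] at hk hk'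
        simp only at hkk
        have h1 := Nat.div_add_mod k n
        have h2 := Nat.div_add_mod k' n
        rw [hk.2, hkk] at h1
        rw [hk'.2] at h2
        exact h1.symm.trans h2
    rw [Finset.card_range] at this
    calc K.card * n ≤ (N / n + 1) * n := Nat.mul_le_mul_right _ this
      _ = N / n * n + n := by ring
      _ ≤ N + n := Nat.add_le_add_right (Nat.div_mul_le_self _ _) _
  have hMnn : (0 : ℝ) ≤ M * Real.exp (-β) := by positivity
  calc _ ≤ ∑ x ∈ E, h (cl x) := Finset.sum_le_sum fun x _ => hpt x
    _ = ∑ c ∈ E.image cl, h c := (Finset.sum_image hinj).symm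
    _ ≤ ∑ c, h c := Finset.sum_le_sum_of_subset_of_nonneg (Finset.subset_univ _) fun c _ _ => hh c
    _ = (M : ℝ) ^ n * (1 + M * Real.exp (-β)) ^ (K.card * n) := by
      simp only [h]
      rw [Fintype.sum_prod_type]
      simp only [Finset.sum_const, Finset.card_univ, Fintype.card_fun, Fintype.card_fin,
        nsmul_eq_mul, ← Finset.mul_sum]
      have := Finset.prod_univ_sum (fun _ : K × Fin n => (Finset.univ : Finset (Option (Fin M))))
        (fun _ o => a o)
      rw [Fintype.piFinset_univ] at this
      rw [← this]
      simp [a, Fintype.sum_option]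
    _ ≤ _ := by
      gcongr
      linarith

lemma aux_count2 {X : Type*} [MetricSpace X] (T : X → X) (n : ℕ) (hn : 0 < n)
    (w : X → ℝ) (hw : ∀ x, 0 < w x) (E : Finset X) (N : ℕ) (A : ℝ) (a : ℝ)
    (hA : ∀ r < n, ∑ x ∈ E, ∏ k ∈ (Finset.range N).filter (fun k => k % n = r), w (T^[k] x) ≤ A)
    (ha : ∀ x ∈ E, n * a ≤ ∑ k ∈ Finset.range N, Real.log (w (T^[k] x))) :
    (E.card : ℝ) * Real.exp a ≤ n * A := by
  have h1 : ∀ x ∈ E, Real.exp a ≤ ∑ r ∈ Finset.range n,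
      ∏ k ∈ (Finset.range N).filter (fun k => k % n = r), w (T^[k] x) := by
    intro x hx
    have h2 := Finset.sum_fiberwise_of_maps_to (s := Finset.range N) (t := Finset.range n)
      (g := fun k => k % n) (fun k _ => Finset.mem_range.2 (Nat.mod_lt _ hn))
      (fun k => Real.log (w (T^[k] x)))
    have h3 : ∑ r ∈ Finset.range n, a ≤ ∑ r ∈ Finset.range n,
        ∑ k ∈ (Finset.range N).filter (fun k => k % n = r), Real.log (w (T^[k] x)) := by
      rw [h2]; simpa using ha x hx
    obtain ⟨r, hr, h4⟩ := Finset.exists_le_of_sum_le (by simpa using hn.ne') h3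
    have h5 : Real.exp a ≤ ∏ k ∈ (Finset.range N).filter (fun k => k % n = r), w (T^[k] x) := by
      rw [← Real.log_prod (fun k _ => (hw _).ne')] at h4
      rwa [Real.le_log_iff_exp_le (Finset.prod_pos fun k _ => hw _)] at h4
    exact h5.trans (Finset.single_le_sum
      (f := fun r => ∏ k ∈ (Finset.range N).filter (fun k => k % n = r), w (T^[k] x))
      (fun r _ => Finset.prod_nonneg fun k _ => (hw _).le) hr)
  calc (E.card : ℝ) * Real.exp a = ∑ x ∈ E, Real.exp a := by simp
    _ ≤ _ := Finset.sum_le_sum h1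
    _ = ∑ r ∈ Finset.range n, ∑ x ∈ E,
      ∏ k ∈ (Finset.range N).filter (fun k => k % n = r), w (T^[k] x) := Finset.sum_comm
    _ ≤ ∑ r ∈ Finset.range n, A := Finset.sum_le_sum fun r hr => hA r (Finset.mem_range.1 hr)
    _ = _ := by simp

lemma aux_cell {X : Type*} [MetricSpace X] [CompactSpace X] [Nonempty X] (δ : ℝ) (hδ : 0 < δ) :
    ∃ (M : ℕ) (cell : X → Fin M), 0 < M ∧ ∀ x y, cell x = cell y → dist x y < δ := by
  obtain ⟨t, -, ht, hcov⟩ := (isCompact_univ (X := X)).finite_cover_balls (half_pos hδ)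
  have hx : ∀ x : X, ∃ y : t, dist x (y : X) < δ / 2 := by
    intro x
    have := hcov (Set.mem_univ x)
    simp only [Set.mem_iUnion] at this
    obtain ⟨y, hy, hxy⟩ := this
    exact ⟨⟨y, hy⟩, hxy⟩
  choose f hf using hx
  have : Finite t := ht
  let e := Finite.equivFin t
  refine ⟨Nat.card t, fun x => e (f x), ?_, ?_⟩
  · obtain ⟨x⟩ := ‹Nonempty X›
    exact (e (f x)).pos
  · intro x y hxy
    have h1 : f x = f y := e.injective hxy
    have h2 := hf x
    have h3 := hf y
    rw [← h1] at h3
    have := dist_triangle_right x y (f x)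
    linarith

lemma aux_emp {X : Type*} [MetricSpace X] [MeasurableSpace X] [BorelSpace X]
    (T : X → X) (N : ℕ) (x : X) (f : X → ℝ) :
    ∫ z, f z ∂(empMeas T N x) = (N : ℝ)⁻¹ * ∑ k ∈ Finset.range N, f (T^[k] x) := by
  unfold empMeas
  rw [integral_smul_measure, integral_finsetSum_measure]
  · simp
  · intro i _
    exact integrable_dirac (by simp)

lemma aux_main {X : Type*} [MetricSpace X] [CompactSpace X] [MeasurableSpace X] [BorelSpace X]
    (T : X → X) (hT : Continuous T) (ε : ℝ) (hε : 0 < ε)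
    (μ : Measure X) (hμp : IsProbabilityMeasure μ) (δ β : ℝ) (hδ : 0 < δ) (hβ : 0 < β)
    (M : ℕ) (hM : 0 < M) (cell : X → Fin M) (hcell : ∀ x y, cell x = cell y → dist x y < 6 * ε)
    (hMβ : M * Real.exp (-β) ≤ δ) (n : ℕ) (hn : 0 < n) (ν : Measure (X × (Fin n → X)))
    (hν : IsProbabilityMeasure ν) (hmap : ν.map Prod.fst = μ)
    (S : Finset X) (hS : ν {p | ∀ k, p.2 k ∈ S} = 1)
    (hd : ∫⁻ p, (Nat.card {k : Fin n // ε ≤ dist (T^[(k : ℕ)] p.1) (p.2 k)} : ℝ≥0∞) ∂ν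
        < ENNReal.ofReal (δ / β * n))
    (hI : mutualInfo ν Prod.fst Prod.snd ≠ ∞) :
    PSent T ⟨μ, hμp⟩ (6 * ε) ≤
      ENNReal.ofReal ((mutualInfo ν Prod.fst Prod.snd).toReal / n + 3 * δ) := by
  classical
  obtain ⟨hl1, hint, hbd⟩ := aux_info T hT ε β n ν S hS hβ.le _ ENNReal.ofReal_ne_top hd.le hI
  rw [hmap] at hint hbd
  have hn' : (0 : ℝ) < n := by exact_mod_cast hn
  rw [ENNReal.toReal_ofReal (by positivity)] at hbd
  set I := (mutualInfo ν Prod.fst Prod.snd).toReal with hIdef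
  have hI0 : 0 ≤ I := ENNReal.toReal_nonneg
  set lam : (Fin n → S) → ℝ := fun u => (ν (Prod.snd ⁻¹' {fun k => (u k : X)})).toReal with hlam
  have hl0 : ∀ u, 0 ≤ lam u := fun u => ENNReal.toReal_nonneg
  let φ : ℝ → ℝ := fun t => max 0 (min 1 (t / ε - 1))
  have hφc : Continuous φ := by fun_prop
  have hφ0 : ∀ t, 0 ≤ φ t := fun t => le_max_left _ _
  have hφ1 : ∀ t, 2 * ε ≤ t → 1 ≤ φ t := by
    intro t ht
    refine le_max_of_le_right (le_min le_rfl ?_)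
    have : 2 ≤ t / ε := by rwa [le_div_iff₀ hε]
    linarith
  have hφle : ∀ t, φ t ≤ if ε ≤ t then 1 else 0 := by
    intro t
    split_ifs with h
    · exact max_le zero_le_one (min_le_left _ _)
    · refine max_le le_rfl ((min_le_right _ _).trans ?_)
      have : t / ε ≤ 1 := by rw [div_le_one hε]; exact (not_le.1 h).le
      linarith
  let w : X → ℝ := fun z => ∑ u : Fin n → S, lam u *
    Real.exp (-(β * ∑ l : Fin n, φ (dist (T^[(l : ℕ)] z) (u l : X))))
  have hpos : ∀ b : (Fin n → S) → ℝ, 0 < ∑ u, lam u * Real.exp (b u) := by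
    intro b
    have : ∃ u, 0 < lam u := by
      by_contra! h
      have := Finset.sum_nonpos (s := Finset.univ) (fun u _ => h u)
      simp only [hlam] at this
      linarith
    obtain ⟨u, hu⟩ := this
    exact Finset.sum_pos' (fun u _ => mul_nonneg (hl0 u) (Real.exp_pos _).le)
      ⟨u, Finset.mem_univ _, by positivity⟩
  have hw : ∀ z, 0 < w z := fun z => hpos _
  have hwc : Continuous w := by
    refine continuous_finset_sum _ fun u _ => continuous_const.mul (Real.continuous_exp.comp ?_)
    refine (continuous_const.mul (continuous_finset_sum _ fun l _ => ?_)).neg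
    exact hφc.comp ((hT.iterate _).dist continuous_const)
  have hfc : Continuous (fun z => Real.log (w z)) := hwc.log fun z => (hw z).ne'
  let f : BoundedContinuousFunction X ℝ := BoundedContinuousFunction.mkOfCompact ⟨_, hfc⟩
  have hff : ∀ z, f z = Real.log (w z) := fun z => rfl
  have hfint : Integrable f μ := f.integrable μ
  have hlow : -I - δ * n ≤ ∫ z, f z ∂μ := by
    have e : β * (δ / β * n) = δ * n := by field_simp
    rw [e] at hbd
    refine hbd.trans (integral_mono hint hfint fun z => ?_)
    simp only [hff]
    refine Real.log_le_log (hpos _) (Finset.sum_le_sum fun u _ => ?_)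
    refine mul_le_mul_of_nonneg_left (Real.exp_le_exp.2 (neg_le_neg ?_)) (hl0 u)
    refine mul_le_mul_of_nonneg_left ?_ hβ.le
    refine (Finset.sum_le_sum fun l _ => hφle _).trans ?_
    rw [Finset.sum_boole, Nat.card_eq_fintype_card, Fintype.card_subtype]
  set θ : ℝ := 1 + M * Real.exp (-β) with hθ
  have hθ1 : 1 ≤ θ := by
    have : (0 : ℝ) ≤ M * Real.exp (-β) := by positivity
    linarith
  have hθδ : θ ≤ Real.exp δ := by
    have := Real.add_one_le_exp δ
    linarith
  have hM1 : (1 : ℝ) ≤ M := by exact_mod_cast hM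
  have hn1 : (1 : ℝ) ≤ n := by exact_mod_cast hn
  set Q : ℝ := n * ((M : ℝ) ^ n * θ ^ n) with hQ
  have hQ1 : 1 ≤ Q := by
    have h1 := one_le_pow₀ (n := n) hM1
    have h2 := one_le_pow₀ (n := n) hθ1
    exact one_le_mul_of_one_le_of_one_le hn1 (one_le_mul_of_one_le_of_one_le h1 h2)
  set C : ℝ := Real.log Q with hC
  have hC0 : 0 ≤ C := Real.log_nonneg hQ1
  set R : ℝ := I / n + 3 * δ with hR
  have hR0 : 0 ≤ R := by positivity
  let F : Set (ProbabilityMeasure X) := {ρ | (∫ z, f z ∂μ) - n * δ < ∫ z, f z ∂(ρ : Measure X)}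
  have hFo : IsOpen F := isOpen_lt continuous_const
    (ProbabilityMeasure.continuous_integral_boundedContinuousFunction f)
  have hFμ : (⟨μ, hμp⟩ : ProbabilityMeasure X) ∈ F := by
    change (∫ z, f z ∂μ) - n * δ < ∫ z, f z ∂μ
    have : 0 < n * δ := by positivity
    linarith
  unfold PSent
  refine iInf_le_of_le F (iInf₂_le_of_le hFo hFμ ?_)
  have hlim : Tendsto (fun N : ℕ => ENNReal.ofReal (C / N + R)) atTop (𝓝 (ENNReal.ofReal R)) := by
    refine ENNReal.tendsto_ofReal ?_
    have := (tendsto_const_div_atTop_nhds_zero_nat C).add_const R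
    simpa using this
  rw [← hlim.limsup_eq]
  refine limsup_le_limsup ?_
  filter_upwards [eventually_gt_atTop 0] with N hN
  have hN' : (0 : ℝ) < N := by exact_mod_cast hN
  set Z := {x : X | ∃ h : IsProbabilityMeasure (empMeas T N x),
        (⟨empMeas T N x, h⟩ : ProbabilityMeasure X) ∈ F} with hZ
  have hcount : ∀ E : Finset X, ↑E ⊆ Z →
      (∀ x ∈ E, ∀ y ∈ E, x ≠ y → 6 * ε ≤ bowenDist T N x y) →
      (E.card : ℝ) ≤ Real.exp (C + N * R) := by
    intro E hEZ hE
    have h1 := aux_count2 T n hn w hw E N _ (N * (-(I / n) - 2 * δ))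
      (fun r hr => aux_count T n hn (fun (u : Fin n → S) k => (u k : X)) lam hl0 hl1 ε β hε hβ.le φ
        hφ0 hφ1 M cell hcell N hN E hE r hr) ?_
    · have e1 : (E.card : ℝ) = (E.card * Real.exp (N * (-(I / n) - 2 * δ))) *
          Real.exp (N * (I / n + 2 * δ)) := by
        rw [mul_assoc, ← Real.exp_add]
        ring_nf
        simp
      rw [e1]
      calc _ ≤ n * ((M : ℝ) ^ n * θ ^ (N + n)) * Real.exp (N * (I / n + 2 * δ)) := by gcongr
        _ = Q * θ ^ N * Real.exp (N * (I / n + 2 * δ)) := by rw [hQ, pow_add]; ring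
        _ ≤ Q * (Real.exp δ) ^ N * Real.exp (N * (I / n + 2 * δ)) := by gcongr
        _ = _ := by
          rw [← Real.exp_nat_mul, Real.exp_add C, hC, Real.exp_log (by linarith), mul_assoc,
            ← Real.exp_add, hR]
          ring_nf
    · intro x hx
      obtain ⟨hp, hxF⟩ := hEZ hx
      have h2 : (∫ z, f z ∂μ) - n * δ < ∫ z, f z ∂(empMeas T N x) := hxF
      rw [aux_emp] at h2
      have h3 : (N : ℝ) * ((∫ z, f z ∂μ) - n * δ) ≤ ∑ k ∈ Finset.range N, f (T^[k] x) := by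
        have := mul_le_mul_of_nonneg_left h2.le hN'.le
        rwa [mul_inv_cancel_left₀ hN'.ne'] at this
      refine le_trans ?_ h3
      have : (n : ℝ) * (N * (-(I / n) - 2 * δ)) = N * (-I - δ * n - n * δ) := by
        field_simp
        ring
      rw [this]
      gcongr
  have hsep : (sepNum T N (6 * ε) Z : ℝ) ≤ Real.exp (C + N * R) := by
    have : sepNum T N (6 * ε) Z ≤ ⌊Real.exp (C + N * R)⌋₊ := by
      refine csSup_le' ?_
      rintro k ⟨E, hEZ, rfl, hE⟩
      exact Nat.le_floor (hcount E hEZ hE)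
    exact (Nat.cast_le.2 this).trans (Nat.floor_le (Real.exp_pos _).le)
  have hlog : Real.log (sepNum T N (6 * ε) Z) ≤ C + N * R := by
    rcases Nat.eq_zero_or_pos (sepNum T N (6 * ε) Z) with h | h
    · rw [h]; simp; positivity
    · rw [Real.log_le_iff_le_exp (by exact_mod_cast h)]
      exact hsep
  rw [← ENNReal.ofReal_natCast N, ← ENNReal.ofReal_div_of_pos hN']
  refine ENNReal.ofReal_le_ofReal ?_
  rw [div_le_iff₀ hN']
  have : (C / N + R) * N = C + N * R := by field_simp
  rw [this]
  exact hlog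

/-- Lemma 3.2 (second inequality): for every `ε > 0` and every ergodic invariant Borel
probability measure `μ`, `PS_μ(T,d,6ε) ≤ R_{μ,L∞}(ε)`. -/
theorem stmt4 {X : Type*} [MetricSpace X] [CompactSpace X] [MeasurableSpace X] [BorelSpace X]
    (T : X → X) (hT : Continuous T)
    (ε : ℝ) (hε : 0 < ε)
    (μ : Measure X) (hμp : IsProbabilityMeasure μ) (hμerg : Ergodic T μ) :
    PSent T ⟨μ, hμp⟩ (6 * ε) ≤ RDistLInfty T μ ε := by
  refine ENNReal.le_of_forall_pos_le_add fun η hη hfin => ?_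
  have hη' : (0 : ℝ) < η := by exact_mod_cast hη
  have : Nonempty X := nonempty_of_isProbabilityMeasure μ
  obtain ⟨M, cell, hM, hcell⟩ := aux_cell (X := X) (6 * ε) (by positivity)
  have hM' : (0 : ℝ) < M := by exact_mod_cast hM
  set δ : ℝ := η / 4 with hδdef
  have hδ : 0 < δ := by positivity
  set β : ℝ := M / δ with hβdef
  have hβ : 0 < β := by positivity
  have hMβ : M * Real.exp (-β) ≤ δ := by
    rw [Real.exp_neg, ← div_eq_mul_inv, div_le_iff₀ (Real.exp_pos _)]
    have h1 := Real.add_one_le_exp β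
    have h2 : (M : ℝ) = δ * β := by rw [hβdef]; field_simp
    nlinarith
  have hRS : RDistLInftyS T μ ε (δ / β) ≤ RDistLInfty T μ ε :=
    le_iSup₂_of_le (δ / β) (by positivity) le_rfl
  have hlt : RDistLInftyS T μ ε (δ / β) < RDistLInfty T μ ε + ENNReal.ofReal δ :=
    lt_of_le_of_lt hRS (ENNReal.lt_add_right hfin.ne (by simpa using hδ))
  unfold RDistLInftyS at hlt
  simp only [iInf_lt_iff] at hlt
  obtain ⟨n, hn, ν, hν, hmap, ⟨S, hS⟩, hd, hlt⟩ := hlt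
  have hn' : (0 : ℝ) < n := by exact_mod_cast hn
  have hI : mutualInfo ν Prod.fst Prod.snd ≠ ∞ := by
    intro h
    rw [h, ENNReal.top_div_of_ne_top (by simp)] at hlt
    exact not_top_lt hlt
  refine (aux_main T hT ε hε μ hμp δ β hδ hβ M hM cell hcell hMβ n hn ν hν hmap S hS hd hI).trans ?_
  have e1 : ENNReal.ofReal ((mutualInfo ν Prod.fst Prod.snd).toReal / n + 3 * δ) =
      mutualInfo ν Prod.fst Prod.snd / n + ENNReal.ofReal (3 * δ) := by
    rw [ENNReal.ofReal_add (by positivity) (by positivity), ENNReal.ofReal_div_of_pos hn',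
      ENNReal.ofReal_toReal hI, ENNReal.ofReal_natCast]
  rw [e1]
  calc _ ≤ RDistLInfty T μ ε + ENNReal.ofReal δ + ENNReal.ofReal (3 * δ) := by gcongr
    _ = RDistLInfty T μ ε + η := by
      rw [add_assoc, ← ENNReal.ofReal_add (by positivity) (by positivity)]
      congr 1
      rw [show δ + 3 * δ = (η : ℝ) by rw [hδdef]; ring, ENNReal.ofReal_coe_nnreal]
end
end

section
/- Let (X,T) be a topological dynamical system with a compatible metric d. Then the upper metric mean dimension satisfies mdim_M^+(T,X,d) = limsup_{ε→0} [ sup_{μ∈E(X,T)} ḥ^K_μ(T,ε) ] / log(1/ε) = limsup_{ε→0} [ sup_{μ∈E(X,T)} h̄^K_μ(T,ε) ] / log(1/ε), where the suprema are over all ergodic T-invariant Borel probability measures. -/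
open Filter MeasureTheory Set
open scoped ENNReal Topology

noncomputable section

open MMD

namespace MMDP

set_option linter.unusedSectionVars false

variable {X : Type*} [MetricSpace X]

/-- points shadowed by one of the sequences in `E` during `n` steps -/
def GG (T : X → X) (r : ℝ) (n : ℕ) (E : Finset (ℕ → X)) : Set X :=
  {x | ∃ z ∈ E, ∀ j < n, dist (T^[j] x) (z j) < r}

open Classical in
/-- number of times up to `N` spent outside `G` -/
def bad (T : X → X) (G : Set X) (N : ℕ) (x : X) : ℕ :=
  ∑ j ∈ Finset.range N, if T^[j] x ∈ G then 0 else 1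

lemma bad_add (T : X → X) (G : Set X) (n k : ℕ) (x : X) :
    bad T G (n + k) x = bad T G n x + bad T G k (T^[n] x) := by
  unfold bad
  rw [Finset.sum_range_add]
  congr 1
  refine Finset.sum_congr rfl fun j _ => ?_
  rw [← Function.iterate_add_apply, add_comm]

/-- concatenation -/
def cat (n : ℕ) (y z : ℕ → X) : ℕ → X := fun j => if j < n then y j else z (j - n)

open Classical in
/-- concatenation of families -/
def catF (n : ℕ) (E F : Finset (ℕ → X)) : Finset (ℕ → X) :=
  (E ×ˢ F).image (fun p => cat n p.1 p.2)

lemma catF_card (n : ℕ) (E F : Finset (ℕ → X)) : (catF n E F).card ≤ E.card * F.card := by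
  classical
  unfold catF
  exact Finset.card_image_le.trans (by rw [Finset.card_product])

lemma mem_catF (T : X → X) (r : ℝ) (n k : ℕ) (E F : Finset (ℕ → X)) (x : X)
    (h1 : x ∈ GG T r n E) (h2 : T^[n] x ∈ GG T r k F) : x ∈ GG T r (n + k) (catF n E F) := by
  obtain ⟨y, hy, hy'⟩ := h1
  obtain ⟨z, hz, hz'⟩ := h2
  refine ⟨cat n y z, ?_, ?_⟩
  · classical
    unfold catF
    exact Finset.mem_image.2 ⟨(y, z), Finset.mk_mem_product hy hz, rfl⟩
  · intro j hj
    unfold cat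
    split_ifs with h
    · exact hy' j h
    · have := hz' (j - n) (by omega)
      rwa [← Function.iterate_add_apply, Nat.sub_add_cancel (by omega)] at this

lemma GG_mono (T : X → X) (r : ℝ) (n : ℕ) {E F : Finset (ℕ → X)} (h : E ⊆ F) :
    GG T r n E ⊆ GG T r n F := fun _ ⟨z, hz, hz'⟩ => ⟨z, h hz, hz'⟩

open Classical in
/-- constant sequences -/
def constF (S : Finset X) : Finset (ℕ → X) := S.image (fun y => fun _ => y)

lemma constF_card (S : Finset X) : (constF S).card ≤ S.card := by
  classical
  exact Finset.card_image_le

lemma mem_constF (T : X → X) (r : ℝ) (S : Finset X) (hS : ∀ x, ∃ y ∈ S, dist x y < r) (x : X) :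
    x ∈ GG T r 1 (constF S) := by
  classical
  obtain ⟨y, hy, h⟩ := hS x
  refine ⟨fun _ => y, Finset.mem_image.2 ⟨y, hy, rfl⟩, ?_⟩
  intro j hj
  obtain rfl : j = 0 := by omega
  simpa using h

lemma full_cover [Nonempty X] (T : X → X) (r : ℝ) (S : Finset X)
    (hS : ∀ x, ∃ y ∈ S, dist x y < r) (N : ℕ) :
    ∃ E : Finset (ℕ → X), E.card ≤ S.card ^ N ∧ ∀ x, x ∈ GG T r N E := by
  induction N with
  | zero =>
    refine ⟨{fun _ => Classical.arbitrary X}, by simp, fun x => ⟨_, Finset.mem_singleton_self _, ?_⟩⟩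
    intro j hj; omega
  | succ N ih =>
    obtain ⟨E, hE, h⟩ := ih
    refine ⟨catF 1 (constF S) E, ?_, fun x => ?_⟩
    · refine (catF_card _ _ _).trans ?_
      rw [pow_succ, mul_comm]
      exact Nat.mul_le_mul hE (constF_card S)
    · rw [add_comm]
      exact mem_catF T r 1 N _ _ x (mem_constF T r S hS x) (h _)

lemma tile_rec [Nonempty X] (T : X → X) (r : ℝ) (S : Finset X)
    (hS : ∀ x, ∃ y ∈ S, dist x y < r) (n : ℕ) (hn : 0 < n) (E : Finset (ℕ → X)) (a : ℝ)
    (ha : 0 ≤ a) (hE : (E.card : ℝ) ≤ Real.exp (a * n) / 2) (N : ℕ) :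
    ∀ f : ℕ, ∃ E' : Finset (ℕ → X),
      (E'.card : ℝ) ≤ (S.card : ℝ) ^ n * Real.exp (a * N) * (2 * S.card) ^ f ∧
      ∀ x, bad T (GG T r n E) N x ≤ f → x ∈ GG T r N E' := by
  classical
  have hq : 1 ≤ (S.card : ℝ) := by
    obtain ⟨y, hy, -⟩ := hS (Classical.arbitrary X)
    exact_mod_cast Finset.card_pos.2 ⟨y, hy⟩
  induction N using Nat.strong_induction_on with
  | _ N ih =>
  intro f
  by_cases hN : N < n
  · obtain ⟨E', h1, h2⟩ := full_cover T r S hS N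
    refine ⟨E', ?_, fun x _ => h2 x⟩
    have e1 : (E'.card : ℝ) ≤ (S.card : ℝ) ^ N := by exact_mod_cast h1
    have e2 : (S.card : ℝ) ^ N ≤ (S.card : ℝ) ^ n := pow_le_pow_right₀ hq hN.le
    have e3 : 1 ≤ Real.exp (a * N) := Real.one_le_exp (by positivity)
    have e4 : 1 ≤ (2 * (S.card : ℝ)) ^ f := one_le_pow₀ (by linarith)
    have e5 : 0 < (S.card : ℝ) ^ n := by positivity
    calc (E'.card : ℝ) ≤ (S.card : ℝ) ^ n * 1 * 1 := by linarith
      _ ≤ _ := by gcongr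
  · push Not at hN
    obtain ⟨m, rfl⟩ := Nat.exists_eq_add_of_le hN
    obtain ⟨E1, hc1, h1⟩ := ih m (by omega) f
    have key1 : ((catF n E E1).card : ℝ) ≤
        (S.card : ℝ) ^ n * Real.exp (a * (n + m : ℕ)) * (2 * S.card) ^ f / 2 := by
      have : ((catF n E E1).card : ℝ) ≤ E.card * E1.card := by exact_mod_cast catF_card n E E1
      refine this.trans ?_
      have e : Real.exp (a * (n + m : ℕ)) = Real.exp (a * n) * Real.exp (a * m) := by
        rw [← Real.exp_add]; push_cast; ring_nf
      rw [e]
      calc (E.card : ℝ) * E1.card ≤ (Real.exp (a * n) / 2) *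
            ((S.card : ℝ) ^ n * Real.exp (a * m) * (2 * S.card) ^ f) := by gcongr
        _ = _ := by ring
    cases f with
    | zero =>
      refine ⟨catF n E E1, key1.trans ?_, ?_⟩
      · exact half_le_self (by positivity)
      · intro x hx
        have hx0 : x ∈ GG T r n E := by
          by_contra hcon
          obtain ⟨k, hk⟩ : ∃ k, n + m = 1 + k := ⟨n + m - 1, by omega⟩
          rw [hk, bad_add] at hx
          simp [bad, hcon] at hx
        refine mem_catF _ _ _ _ _ _ _ hx0 (h1 _ ?_)
        rw [bad_add] at hx
        omega
    | succ f =>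
      obtain ⟨k, hk⟩ : ∃ k, n + m = 1 + k := ⟨n + m - 1, by omega⟩
      obtain ⟨E2, hc2, h2⟩ := ih k (by omega) f
      have key2 : ((catF 1 (constF S) E2).card : ℝ) ≤
        (S.card : ℝ) ^ n * Real.exp (a * (n + m : ℕ)) * (2 * S.card) ^ (f + 1) / 2 := by
        have : ((catF 1 (constF S) E2).card : ℝ) ≤ S.card * E2.card := by
          exact_mod_cast (catF_card 1 (constF S) E2).trans
            (Nat.mul_le_mul_right _ (constF_card S))
        refine this.trans ?_
        have e : Real.exp (a * k) ≤ Real.exp (a * (n + m : ℕ)) := by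
          rw [hk]; apply Real.exp_le_exp.2; push_cast; nlinarith
        calc (S.card : ℝ) * E2.card ≤ S.card *
            ((S.card : ℝ) ^ n * Real.exp (a * (n + m : ℕ)) * (2 * S.card) ^ f) := by
              gcongr; exact hc2.trans (by gcongr)
          _ = _ := by ring
      refine ⟨catF n E E1 ∪ catF 1 (constF S) E2, ?_, ?_⟩
      · have : ((catF n E E1 ∪ catF 1 (constF S) E2).card : ℝ) ≤
            (catF n E E1).card + (catF 1 (constF S) E2).card := by
          exact_mod_cast Finset.card_union_le _ _
        linarith
      · intro x hx
        by_cases hx0 : x ∈ GG T r n E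
        · refine GG_mono T r _ Finset.subset_union_left
            (mem_catF _ _ _ _ _ _ _ hx0 (h1 _ ?_))
          rw [bad_add] at hx
          omega
        · rw [hk] at hx ⊢
          refine GG_mono T r _ Finset.subset_union_right
            (mem_catF _ _ _ _ _ _ _ (mem_constF T r S hS x) (h2 _ ?_))
          rw [bad_add] at hx
          have : bad T (GG T r n E) 1 x = 1 := by simp [bad, hx0]
          omega

lemma exists_net [CompactSpace X] {r : ℝ} (hr : 0 < r) :
    ∃ S : Finset X, ∀ x, ∃ y ∈ S, dist x y < r := by
  obtain ⟨t, -, ht, h⟩ := (isCompact_univ (X := X)).finite_cover_balls hr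
  refine ⟨ht.toFinset, fun x => ?_⟩
  have := h (mem_univ x)
  simp only [mem_iUnion, Metric.mem_ball] at this
  obtain ⟨y, hy, h⟩ := this
  exact ⟨y, by simpa using hy, h⟩

lemma tile [Nonempty X] [CompactSpace X] (T : X → X) {r c κ : ℝ} (hr : 0 < r) (hc : 0 ≤ c)
    (hκ : 0 < κ) :
    ∃ η : ℝ, 0 < η ∧ ∃ M0 : ℕ, ∀ n ≥ M0, ∀ E : Finset (ℕ → X),
      (E.card : ℝ) ≤ Real.exp (c * n) → ∃ N0 : ℕ, ∀ N ≥ N0, ∃ E' : Finset (ℕ → X),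
        (E'.card : ℝ) ≤ Real.exp ((c + κ) * N) ∧
        ∀ x, (bad T (GG T r n E) N x : ℝ) ≤ η * N → x ∈ GG T r N E' := by
  obtain ⟨S, hS⟩ := exists_net (X := X) hr
  have hq : 1 ≤ (S.card : ℝ) := by
    obtain ⟨y, hy, -⟩ := hS (Classical.arbitrary X)
    exact_mod_cast Finset.card_pos.2 ⟨y, hy⟩
  set q : ℝ := (S.card : ℝ) with hqdef
  have hl : 0 < Real.log (2 * q) := Real.log_pos (by linarith)
  have hl2 : 0 ≤ Real.log q := Real.log_nonneg hq
  refine ⟨κ / (4 * Real.log (2 * q)), by positivity, ⌈2 * Real.log 2 / κ⌉₊ + 1, ?_⟩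
  intro n hn E hE
  have hnM : 2 * Real.log 2 / κ ≤ n := by
    refine (Nat.le_ceil _).trans ?_
    exact_mod_cast (by omega : ⌈2 * Real.log 2 / κ⌉₊ ≤ n)
  rw [div_le_iff₀ hκ] at hnM
  have hE' : (E.card : ℝ) ≤ Real.exp ((c + κ / 2) * n) / 2 := by
    refine hE.trans ?_
    rw [le_div_iff₀ two_pos]
    calc Real.exp (c * n) * 2 = Real.exp (c * n + Real.log 2) := by
          rw [Real.exp_add, Real.exp_log two_pos]
      _ ≤ _ := by apply Real.exp_le_exp.2; linarith
  refine ⟨⌈4 * (n * Real.log q) / κ⌉₊, fun N hN => ?_⟩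
  have hNM : 4 * (n * Real.log q) / κ ≤ N := (Nat.le_ceil _).trans (by exact_mod_cast hN)
  rw [div_le_iff₀ hκ] at hNM
  obtain ⟨E', h1, h2⟩ := tile_rec T r S hS n (by omega) E (c + κ / 2) (by positivity) hE' N
    ⌊κ / (4 * Real.log (2 * q)) * N⌋₊
  refine ⟨E', h1.trans ?_, fun x hx => h2 x (Nat.le_floor hx)⟩
  rw [← hqdef]
  have e1 : q ^ n = Real.exp (n * Real.log q) := by
    rw [mul_comm, ← Real.rpow_def_of_pos (by linarith), Real.rpow_natCast]
  have e2 : (2 * q) ^ ⌊κ / (4 * Real.log (2 * q)) * N⌋₊ ≤ Real.exp (κ / 4 * N) := by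
    rw [← Real.rpow_natCast, Real.rpow_def_of_pos (by linarith)]
    apply Real.exp_le_exp.2
    calc _ ≤ Real.log (2 * q) * (κ / (4 * Real.log (2 * q)) * N) := by
          gcongr; exact Nat.floor_le (by positivity)
      _ = _ := by field_simp
  rw [e1]
  calc _ ≤ Real.exp (n * Real.log q) * Real.exp ((c + κ / 2) * N) * Real.exp (κ / 4 * N) := by
        gcongr
    _ = Real.exp (n * Real.log q + (c + κ / 2) * N + κ / 4 * N) := by
        rw [Real.exp_add, Real.exp_add]
    _ ≤ _ := by apply Real.exp_le_exp.2; linarith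

end MMDP

namespace MMDP

open ProbabilityTheory

/-- visit frequency -/
def fr {Ω : Type*} (T : Ω → Ω) (A : Set Ω) (N : ℕ) (x : Ω) : ℝ :=
  (N : ℝ)⁻¹ * ∑ j ∈ Finset.range N, A.indicator (fun _ => (1 : ℝ)) (T^[j] x)

lemma fr_measurable {Ω : Type*} [MeasurableSpace Ω] {T : Ω → Ω} (hT : Measurable T) {A : Set Ω}
    (hA : MeasurableSet A) (N : ℕ) : Measurable (fr T A N) := by
  unfold fr
  refine Measurable.const_mul (Finset.measurable_sum _ fun j _ => ?_) _
  exact (measurable_const.indicator hA).comp (hT.iterate j)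

lemma inv_version {Ω : Type*} [MeasurableSpace Ω] {μ : Measure Ω}
    {T : Ω → Ω} (hT : MeasurePreserving T μ μ) {g : Ω → ℝ} (hg : AEStronglyMeasurable g μ)
    (h : g ∘ T =ᵐ[μ] g) : AEStronglyMeasurable[MeasurableSpace.invariants T] g μ := by
  set g0 := hg.mk g with hg0
  have hm : Measurable g0 := hg.stronglyMeasurable_mk.measurable
  have hgg : g =ᵐ[μ] g0 := hg.ae_eq_mk
  have h0 : g0 ∘ T =ᵐ[μ] g0 := by
    have := hT.quasiMeasurePreserving.ae_eq_comp hgg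
    exact this.symm.trans (h.trans hgg)
  have hn : ∀ n : ℕ, ∀ᵐ x ∂μ, g0 (T^[n] x) = g0 x := by
    intro n
    induction n with
    | zero => simp
    | succ n ih =>
      have := (hT.iterate n).quasiMeasurePreserving.ae h0
      filter_upwards [ih, this] with x h1 h2
      rw [Function.iterate_succ_apply']
      simpa [h1] using h2
  let g1 : Ω → ℝ := fun x => limsup (fun n => g0 (T^[n] x)) atTop
  have hg1m : Measurable g1 := Measurable.limsup fun n => hm.comp (hT.measurable.iterate n)
  have hg1T : g1 ∘ T = g1 := by
    funext x
    have := Filter.limsup_nat_add (fun n => g0 (T^[n] x)) 1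
    simpa [g1, Function.iterate_add_apply] using this
  refine ⟨g1, ?_, ?_⟩
  · apply Measurable.stronglyMeasurable
    rw [MeasurableSpace.measurable_invariants_dom]
    exact ⟨hg1m, fun s _ => by rw [hg1T]⟩
  · refine hgg.trans ?_
    filter_upwards [ae_all_iff.2 hn] with x hx
    simp [g1, hx]

lemma mean_erg {Ω : Type*} [MeasurableSpace Ω] [StandardBorelSpace Ω] {μ : Measure Ω}
    [IsProbabilityMeasure μ] {T : Ω → Ω} (hT : MeasurePreserving T μ μ) {A : Set Ω}
    (hA : MeasurableSet A) :
    TendstoInMeasure μ (fun N => fr T A N) atTop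
      (fun x => (condExpKernel μ (MeasurableSpace.invariants T) x).real A) := by
  have hle : MeasurableSpace.invariants T ≤ ‹MeasurableSpace Ω› := MeasurableSpace.invariants_le T
  let U : Lp ℝ 2 μ →L[ℝ] Lp ℝ 2 μ := (Lp.compMeasurePreservingₗᵢ ℝ T hT).toContinuousLinearMap
  have hU : ‖U‖ ≤ 1 := LinearIsometry.norm_toContinuousLinearMap_le _
  have hUa : ∀ f, U f = Lp.compMeasurePreserving T hT f := fun f => rfl
  have hUi : ∀ n : ℕ, ∀ f, U^[n] f = Lp.compMeasurePreserving T^[n] (hT.iterate n) f := by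
    intro n f
    rw [← Lp.compMeasurePreserving_iterate]; rfl
  set F : Lp ℝ 2 μ := indicatorConstLp 2 hA (measure_ne_top μ A) 1 with hF
  have hlim := U.tendsto_birkhoffAverage_orthogonalProjection hU F
  set K := (U.eqLocus (1 : Lp ℝ 2 μ →L[ℝ] Lp ℝ 2 μ)) with hK
  set g : Lp ℝ 2 μ := (K.orthogonalProjectionOnto F : Lp ℝ 2 μ) with hg
  have hm := tendstoInMeasure_of_tendsto_Lp hlim
  refine hm.congr (fun N => ?_) ?_
  · have e1 : ∀ j : ℕ, (U^[j] F : Lp ℝ 2 μ) =ᵐ[μ]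
        fun x => A.indicator (fun _ => (1 : ℝ)) (T^[j] x) := by
      intro j
      rw [hUi]
      refine (Lp.coeFn_compMeasurePreserving _ _).trans ?_
      exact (hT.iterate j).quasiMeasurePreserving.ae_eq_comp indicatorConstLp_coeFn
    unfold birkhoffAverage birkhoffSum
    refine (Lp.coeFn_smul _ _).trans ?_
    have e2 := Lp.coeFn_finsetSum (Finset.range N) (fun j => (U^[j] F : Lp ℝ 2 μ))
    filter_upwards [e2, ae_all_iff.2 e1] with x h2 h1
    simp only [Pi.smul_apply, smul_eq_mul, id]
    rw [h2]
    simp [fr, h1]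
  · have hgK : U g = g := (K.orthogonalProjectionOnto F).2
    have hginv : (g : Ω → ℝ) ∘ T =ᵐ[μ] g := by
      have := Lp.coeFn_compMeasurePreserving g hT
      rw [← hUa, hgK] at this
      exact this.symm
    have hgm := inv_version hT (Lp.aestronglyMeasurable g) hginv
    have hgi : Integrable g μ := (Lp.memLp g).integrable (by norm_num)
    refine EventuallyEq.trans ?_ (condExpKernel_ae_eq_condExp hle hA).symm
    refine ae_eq_condExp_of_forall_setIntegral_eq hle ((integrable_const _).indicator hA)
      (fun s _ _ => hgi.integrableOn) (fun s hs _ => ?_) hgm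
    obtain ⟨hsm, hsT⟩ := MeasurableSpace.measurableSet_invariants.1 hs
    set B : Lp ℝ 2 μ := indicatorConstLp 2 hsm (measure_ne_top μ s) 1 with hB
    have hBK : B ∈ K := by
      change U B = B
      rw [hUa, hB, Lp.indicatorConstLp_compMeasurePreserving]
      congr
    have horth : inner ℝ B (F - g) = 0 := by
      have := K.sub_starProjection_mem_orthogonal F
      exact (Submodule.mem_orthogonal _ _).1 this B hBK
    rw [inner_sub_right, sub_eq_zero, hB, L2.inner_indicatorConstLp_one hsm,
      L2.inner_indicatorConstLp_one hsm] at horth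
    rw [← horth]
    refine setIntegral_congr_ae hsm ?_
    filter_upwards [indicatorConstLp_coeFn (p := 2) (hs := hA) (hμs := measure_ne_top μ A)
      (c := (1:ℝ))] with x hx _
    exact hx

lemma ker_inv {Ω : Type*} [MeasurableSpace Ω] [StandardBorelSpace Ω] {μ : Measure Ω}
    [IsProbabilityMeasure μ] {T : Ω → Ω} {B : Set Ω} (hB : MeasurableSet B) (hBT : T ⁻¹' B = B) :
    ∀ᵐ x ∂μ, (condExpKernel μ (MeasurableSpace.invariants T) x).real B =
      B.indicator (fun _ => (1 : ℝ)) x := by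
  have hle : MeasurableSpace.invariants T ≤ ‹MeasurableSpace Ω› := MeasurableSpace.invariants_le T
  have hBi : MeasurableSet[MeasurableSpace.invariants T] B :=
    MeasurableSpace.measurableSet_invariants.2 ⟨hB, hBT⟩
  have h1 := condExpKernel_ae_eq_condExp (μ := μ) hle hB
  have h2 : μ[B.indicator (fun _ => (1 : ℝ))|MeasurableSpace.invariants T] =
      B.indicator (fun _ => (1 : ℝ)) :=
    condExp_of_stronglyMeasurable hle (stronglyMeasurable_const.indicator hBi)
      ((integrable_const _).indicator hB)
  rw [h2] at h1
  exact h1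

lemma ker_preimage {Ω : Type*} [MeasurableSpace Ω] [StandardBorelSpace Ω] {μ : Measure Ω}
    [IsProbabilityMeasure μ] {T : Ω → Ω} (hT : MeasurePreserving T μ μ) {A : Set Ω}
    (hA : MeasurableSet A) :
    ∀ᵐ x ∂μ, (condExpKernel μ (MeasurableSpace.invariants T) x).real (T ⁻¹' A) =
      (condExpKernel μ (MeasurableSpace.invariants T) x).real A := by
  have hle : MeasurableSpace.invariants T ≤ ‹MeasurableSpace Ω› := MeasurableSpace.invariants_le T
  have hA' := hT.measurable hA
  have h1 := condExpKernel_ae_eq_condExp (μ := μ) hle hA'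
  have h2 := condExpKernel_ae_eq_condExp (μ := μ) hle hA
  refine EventuallyEq.trans ?_ h1.symm |>.symm
  refine ae_eq_condExp_of_forall_setIntegral_eq hle ((integrable_const _).indicator hA')
      (fun s _ _ => (integrable_condExp.congr h2.symm).integrableOn) (fun s hs _ => ?_)
      (StronglyMeasurable.aestronglyMeasurable stronglyMeasurable_condExp |>.congr h2.symm)
  obtain ⟨hsm, hsT⟩ := MeasurableSpace.measurableSet_invariants.1 hs
  rw [setIntegral_congr_ae hsm (h2.mono fun x hx _ => hx), setIntegral_condExp hle
    ((integrable_const _).indicator hA) hs]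
  simp only [integral_indicator hA, integral_indicator hA', Measure.restrict_restrict hA,
    Measure.restrict_restrict hA', integral_const, smul_eq_mul, mul_one,
    measureReal_restrict_apply_univ]
  have := hT.measureReal_preimage (hA.inter hsm).nullMeasurableSet
  rw [preimage_inter, hsT] at this
  exact this.symm

end MMDP

namespace MMDP

open ProbabilityTheory

lemma fr_nonneg {Ω : Type*} (T : Ω → Ω) (A : Set Ω) (N : ℕ) (x : Ω) : 0 ≤ fr T A N x := by
  unfold fr
  refine mul_nonneg (by positivity) (Finset.sum_nonneg fun j _ => ?_)
  exact indicator_nonneg (fun _ _ => zero_le_one) _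

lemma fr_le_one {Ω : Type*} (T : Ω → Ω) (A : Set Ω) (N : ℕ) (x : Ω) : fr T A N x ≤ 1 := by
  unfold fr
  have : ∑ j ∈ Finset.range N, A.indicator (fun _ => (1 : ℝ)) (T^[j] x) ≤ N := by
    calc _ ≤ ∑ j ∈ Finset.range N, (1 : ℝ) := Finset.sum_le_sum fun j _ =>
          indicator_le_self' (fun _ _ => zero_le_one) _
      _ = N := by simp
  rcases Nat.eq_zero_or_pos N with h | h
  · subst h; simp
  · rw [inv_mul_le_iff₀ (by exact_mod_cast h)]; simpa using this

lemma integral_fr {Ω : Type*} [MeasurableSpace Ω] {ν : Measure Ω}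
    [IsProbabilityMeasure ν] {T : Ω → Ω} (hT : MeasurePreserving T ν ν) {A B : Set Ω}
    (hA : MeasurableSet A) (hB : MeasurableSet B) (hBT : T ⁻¹' B = B) {N : ℕ} (hN : 0 < N) :
    ∫ x in B, fr T A N x ∂ν = ν.real (A ∩ B) := by
  have hj : ∀ j : ℕ, ∫ x in B, A.indicator (fun _ => (1 : ℝ)) (T^[j] x) ∂ν = ν.real (A ∩ B) := by
    intro j
    have hBj : T^[j] ⁻¹' B = B := by
      induction j with
      | zero => rfl
      | succ j ih => rw [Function.iterate_succ, preimage_comp, ih, hBT]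
    have hAj : MeasurableSet (T^[j] ⁻¹' A) := (hT.measurable.iterate j) hA
    have : (fun x => A.indicator (fun _ => (1 : ℝ)) (T^[j] x)) =
        (T^[j] ⁻¹' A).indicator (fun _ => (1 : ℝ)) := by
      funext x; rfl
    rw [this, integral_indicator hAj, Measure.restrict_restrict hAj]
    have h2 := (hT.iterate j).measureReal_preimage (hA.inter hB).nullMeasurableSet
    rw [preimage_inter, hBj] at h2
    simp [h2]
  unfold fr
  rw [integral_const_mul, integral_finsetSum]
  · simp only [hj]
    have : (N : ℝ) ≠ 0 := by positivity
    simp [this]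
  · intro j _
    refine Integrable.integrableOn ?_
    exact ((hT.iterate j).integrable_comp_of_integrable ((integrable_const _).indicator hA))

lemma ker_const {Ω : Type*} [MeasurableSpace Ω] [StandardBorelSpace Ω] {μ : Measure Ω}
    [IsProbabilityMeasure μ] {T : Ω → Ω} {g : Ω → ℝ} (hg : Measurable g) (hgT : g ∘ T = g) :
    ∀ᵐ x ∂μ, ∀ᵐ y ∂(condExpKernel μ (MeasurableSpace.invariants T) x), g y = g x := by
  have h : ∀ q : ℚ, ∀ᵐ x ∂μ, (condExpKernel μ (MeasurableSpace.invariants T) x).real {y | g y < q} =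
      ({y | g y < q} : Set Ω).indicator (fun _ => (1 : ℝ)) x := by
    intro q
    refine ker_inv (hg measurableSet_Iio) ?_
    ext y
    exact iff_of_eq (congrArg (· < (q : ℝ)) (congrFun hgT y))
  filter_upwards [ae_all_iff.2 h] with x hx
  have h2 : ∀ q : ℚ, ∀ᵐ y ∂(condExpKernel μ (MeasurableSpace.invariants T) x),
      (g y < q ↔ g x < q) := by
    intro q
    have hm : MeasurableSet {y | g y < q} := hg measurableSet_Iio
    by_cases hq : g x < q
    · have := hx q
      rw [indicator_of_mem (by exact hq)] at this
      have h3 : (condExpKernel μ (MeasurableSpace.invariants T) x) {y | g y < q} = 1 := by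
        rw [measureReal_def] at this
        rw [← ENNReal.ofReal_toReal (measure_ne_top _ {y | g y < q}), this]; simp
      have h4 := (mem_ae_iff_prob_eq_one hm).2 h3
      filter_upwards [h4] with y hy
      exact ⟨fun _ => hq, fun _ => hy⟩
    · have := hx q
      rw [indicator_of_notMem (by exact hq), measureReal_eq_zero_iff] at this
      have h4 := measure_eq_zero_iff_ae_notMem.1 this
      filter_upwards [h4] with y hy
      exact ⟨fun h => absurd h hy, fun h => absurd h hq⟩
  filter_upwards [ae_all_iff.2 h2] with y hy
  rcases lt_trichotomy (g y) (g x) with hlt | heq | hlt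
  · obtain ⟨q, h1, h2⟩ := exists_rat_btwn hlt
    exact absurd ((hy q).1 h1) (not_lt.2 h2.le)
  · exact heq
  · obtain ⟨q, h1, h2⟩ := exists_rat_btwn hlt
    exact absurd ((hy q).2 h1) (not_lt.2 h2.le)

lemma ae_ker {Ω : Type*} [MeasurableSpace Ω] [StandardBorelSpace Ω] {μ : Measure Ω}
    [IsProbabilityMeasure μ] {T : Ω → Ω} {p : Ω → Prop} (h : ∀ᵐ y ∂μ, p y) :
    ∀ᵐ x ∂μ, ∀ᵐ y ∂(condExpKernel μ (MeasurableSpace.invariants T) x), p y := by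
  have hle : MeasurableSpace.invariants T ≤ ‹MeasurableSpace Ω› := MeasurableSpace.invariants_le T
  rw [← condExpKernel_comp_trim (μ := μ) hle] at h
  exact ae_of_ae_trim hle (Measure.ae_ae_of_ae_comp h)

theorem ergodic_ker {Ω : Type*} [MeasurableSpace Ω] [StandardBorelSpace Ω] {μ : Measure Ω}
    [IsProbabilityMeasure μ] {T : Ω → Ω} (hT : MeasurePreserving T μ μ) :
    ∀ᵐ x ∂μ, Ergodic T (condExpKernel μ (MeasurableSpace.invariants T) x) := by
  set κ := condExpKernel μ (MeasurableSpace.invariants T) with hκ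
  set 𝒜 := generateSetAlgebra (MeasurableSpace.countableGeneratingSet Ω) with h𝒜
  have hc : 𝒜.Countable :=
    countable_generateSetAlgebra (MeasurableSpace.countable_countableGeneratingSet)
  have hgen : ‹MeasurableSpace Ω› = MeasurableSpace.generateFrom 𝒜 := by
    rw [h𝒜, generateFrom_generateSetAlgebra_eq,
      MeasurableSpace.generateFrom_countableGeneratingSet]
  have hpi : IsPiSystem 𝒜 := isSetAlgebra_generateSetAlgebra.isSetRing.isSetSemiring.isPiSystem
  have hmeas : ∀ A ∈ 𝒜, MeasurableSet A := by
    intro A hA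
    rw [hgen]
    exact MeasurableSpace.measurableSet_generateFrom hA
  have h1 : ∀ A ∈ 𝒜, ∀ᵐ x ∂μ, (κ x).real (T ⁻¹' A) = (κ x).real A :=
    fun A hA => ker_preimage hT (hmeas A hA)
  have h2 : ∀ A ∈ 𝒜, ∃ ns : ℕ → ℕ, StrictMono ns ∧ ∀ᵐ x ∂μ, ∀ᵐ y ∂(κ x),
      Tendsto (fun k => fr T A (ns k) y) atTop (𝓝 ((κ x).real A)) := by
    intro A hA
    obtain ⟨ns, hns, h⟩ := (mean_erg hT (hmeas A hA)).exists_seq_tendsto_ae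
    refine ⟨ns, hns, ?_⟩
    have hm : Measurable[MeasurableSpace.invariants T] (fun y => (κ y).real A) :=
      (measurable_condExpKernel (hmeas A hA)).ennreal_toReal
    have hk := ker_const (μ := μ) (T := T) (g := fun y => (κ y).real A)
      (hm.mono (MeasurableSpace.invariants_le T) le_rfl)
      (MeasurableSpace.comp_eq_of_measurable_invariants hm)
    filter_upwards [ae_ker (T := T) h, hk] with x hx1 hx2
    filter_upwards [hx1, hx2] with y hy1 hy2
    rw [← hy2]
    exact hy1
  choose! ns hns h2 using h2
  filter_upwards [(ae_ball_iff hc).2 h1, (ae_ball_iff hc).2 h2] with x hx1 hx2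
  have hinv : MeasurePreserving T (κ x) (κ x) := by
    refine ⟨hT.measurable, ?_⟩
    have : IsProbabilityMeasure ((κ x).map T) :=
      Measure.isProbabilityMeasure_map hT.measurable.aemeasurable
    refine ext_of_generate_finite 𝒜 hgen hpi (fun A hA => ?_) (by simp)
    rw [Measure.map_apply hT.measurable (hmeas A hA)]
    exact (measureReal_eq_measureReal_iff).1 (hx1 A hA)
  refine ⟨hinv, ⟨fun B hB hBT => ?_⟩⟩
  have key : ∀ A ∈ 𝒜, (κ x).real (A ∩ B) = (κ x).real B * (κ x).real A := by
    intro A hA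
    have hl : Tendsto (fun k => ∫ y in B, fr T A (ns A k) y ∂(κ x)) atTop
        (𝓝 (∫ y in B, (κ x).real A ∂(κ x))) := by
      refine tendsto_integral_of_dominated_convergence (fun _ => 1) (fun k => ?_)
        (integrable_const _) (fun k => ?_) (ae_restrict_of_ae (hx2 A hA))
      · exact (fr_measurable hT.measurable (hmeas A hA) _).aestronglyMeasurable
      · refine Eventually.of_forall fun y => ?_
        rw [Real.norm_eq_abs, abs_of_nonneg (fr_nonneg _ _ _ _)]
        exact fr_le_one _ _ _ _
    have hl2 : Tendsto (fun k => ∫ y in B, fr T A (ns A k) y ∂(κ x)) atTop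
        (𝓝 ((κ x).real (A ∩ B))) := by
      refine tendsto_const_nhds.congr' ?_
      filter_upwards [eventually_gt_atTop 0] with k hk
      exact (integral_fr hinv (hmeas A hA) hB hBT
        (lt_of_lt_of_le hk ((hns A hA).id_le k))).symm
    have := tendsto_nhds_unique hl2 hl
    simpa using this
  have hme : (κ x).restrict B = (κ x) B • (κ x) := by
    refine ext_of_generate_finite 𝒜 hgen hpi (fun A hA => ?_) (by simp)
    rw [Measure.restrict_apply (hmeas A hA)]
    rw [← measureReal_eq_measureReal_iff (h₂ := by
      rw [Measure.smul_apply, smul_eq_mul]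
      exact ENNReal.mul_ne_top (measure_ne_top _ _) (measure_ne_top _ _))]
    rw [key A hA]
    simp [measureReal_def]
  have hBB := congrArg (fun m => m B) hme
  simp only [Measure.restrict_apply_self, Measure.smul_apply, smul_eq_mul] at hBB
  rw [eventuallyConst_set']
  rcases eq_or_ne ((κ x) B) 0 with h0 | h0
  · left; rwa [ae_eq_empty]
  · right
    rw [ae_eq_univ, prob_compl_eq_zero_iff hB]
    have := (ENNReal.mul_eq_left h0 (measure_ne_top _ _)).1 hBB.symm
    exact this

end MMDP

namespace MMDP

set_option linter.unusedSectionVars false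

variable {X : Type*} [MetricSpace X]

lemma isOpen_shadow {T : X → X} (hT : Continuous T) (r : ℝ) (n : ℕ) (z : ℕ → X) :
    IsOpen {x | ∀ j < n, dist (T^[j] x) (z j) < r} := by
  have : {x | ∀ j < n, dist (T^[j] x) (z j) < r} =
      ⋂ j ∈ Set.Iio n, {x | dist (T^[j] x) (z j) < r} := by
    ext x; simp
  rw [this]
  refine (Set.finite_Iio n).isOpen_biInter fun j _ => ?_
  exact isOpen_lt ((hT.iterate j).dist continuous_const) continuous_const

lemma isOpen_GG {T : X → X} (hT : Continuous T) (r : ℝ) (n : ℕ) (E : Finset (ℕ → X)) :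
    IsOpen (GG T r n E) := by
  have : GG T r n E = ⋃ z ∈ E, {x | ∀ j < n, dist (T^[j] x) (z j) < r} := by
    ext x; simp [GG]
  rw [this]
  exact isOpen_biUnion fun z _ => isOpen_shadow hT r n z

lemma bad_fr (T : X → X) (G : Set X) (N : ℕ) (x : X) :
    (bad T G N x : ℝ) = N * (1 - fr T G N x) := by
  classical
  rcases Nat.eq_zero_or_pos N with h | h
  · subst h; simp [bad]
  · have hN : (N : ℝ) ≠ 0 := by positivity
    unfold fr bad
    rw [mul_sub, mul_inv_cancel_left₀ hN, eq_sub_iff_add_eq]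
    push_cast
    rw [← Finset.sum_add_distrib, mul_one]
    rw [Finset.sum_congr rfl (g := fun _ => (1 : ℝ))]
    · simp
    · intro j _
      by_cases hj : T^[j] x ∈ G <;> simp [hj]

lemma bowen_lt (T : X → X) (n : ℕ) (x y : X) {ρ : ℝ} (hρ : 0 < ρ) :
    bowenDist T n x y < ρ ↔ ∀ j < n, dist (T^[j] x) (T^[j] y) < ρ := by
  unfold bowenDist
  constructor
  · intro h j hj
    refine lt_of_le_of_lt ?_ h
    exact le_ciSup (f := fun j : Fin n => dist (T^[(j : ℕ)] x) (T^[(j : ℕ)] y))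
      (Set.finite_range _).bddAbove ⟨j, hj⟩
  · intro h
    rcases Nat.eq_zero_or_pos n with h0 | h0
    · subst h0; simpa using hρ
    · haveI : Nonempty (Fin n) := ⟨⟨0, h0⟩⟩
      obtain ⟨j, hj⟩ := exists_eq_ciSup_of_finite
        (f := fun j : Fin n => dist (T^[(j : ℕ)] x) (T^[(j : ℕ)] y))
      rw [← hj]
      exact h j j.2

lemma exists_span [CompactSpace X] {T : X → X} (hT : Continuous T) (n : ℕ) {ε : ℝ} (hε : 0 < ε) :
    ∃ E : Finset X, ∀ z, ∃ y ∈ E, bowenDist T n z y < ε := by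
  obtain ⟨t, -, ht⟩ := (isCompact_univ (X := X)).elim_nhds_subcover
    (fun y => {x | ∀ j < n, dist (T^[j] x) (T^[j] y) < ε})
    (fun y _ => (isOpen_shadow hT ε n (fun j => T^[j] y)).mem_nhds (by simp [hε]))
  refine ⟨t, fun z => ?_⟩
  have := ht (mem_univ z)
  simp only [mem_iUnion] at this
  obtain ⟨y, hy, h⟩ := this
  exact ⟨y, hy, (bowen_lt _ _ _ _ hε).2 h⟩

lemma bowen_symm (T : X → X) (n : ℕ) (x y : X) : bowenDist T n x y = bowenDist T n y x := by
  unfold bowenDist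
  simp only [dist_comm]

lemma spanNum_spec [CompactSpace X] {T : X → X} (hT : Continuous T) (n : ℕ) {ε : ℝ} (hε : 0 < ε) :
    ∃ E : Finset X, E.card = spanNum T n ε univ ∧ ∀ z, ∃ y ∈ E, bowenDist T n z y < ε := by
  obtain ⟨E, hE⟩ := exists_span hT n hε
  have := Nat.sInf_mem (s := {k | ∃ E : Finset X, E.card = k ∧ ∀ z ∈ (univ : Set X), ∃ y ∈ E,
    bowenDist T n z y < ε}) ⟨_, E, rfl, fun z _ => hE z⟩
  obtain ⟨E, h1, h2⟩ := this
  exact ⟨E, h1, fun z => h2 z (mem_univ z)⟩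

variable [MeasurableSpace X] [BorelSpace X]

lemma span_meas {T : X → X} {n : ℕ} {ε δ : ℝ} (hδ : δ ∈ Ioo (0 : ℝ) 1)
    (ν : Measure X) [IsProbabilityMeasure ν] {E : Finset X}
    (hE : ∀ z, ∃ y ∈ E, bowenDist T n z y < ε) :
    ENNReal.ofReal (1 - δ) < ν (⋃ x ∈ E, {y | bowenDist T n x y < ε}) := by
  have : (⋃ x ∈ E, {y | bowenDist T n x y < ε}) = univ := by
    refine eq_univ_of_forall fun z => ?_
    obtain ⟨y, hy, h⟩ := hE z
    simp only [mem_iUnion]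
    exact ⟨y, hy, by rw [mem_setOf_eq, bowen_symm]; exact h⟩
  rw [this, measure_univ]
  exact ENNReal.ofReal_lt_one.2 (by linarith [hδ.1])

lemma katok_le_span [CompactSpace X] {T : X → X} (hT : Continuous T) (n : ℕ) {ε δ : ℝ}
    (hε : 0 < ε) (hδ : δ ∈ Ioo (0 : ℝ) 1) (ν : Measure X) [IsProbabilityMeasure ν] :
    katokNum T ν n ε δ ≤ spanNum T n ε univ := by
  obtain ⟨E, h1, h2⟩ := spanNum_spec hT n hε
  exact Nat.sInf_le ⟨E, h1, span_meas hδ ν h2⟩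

lemma katok_spec [CompactSpace X] {T : X → X} (hT : Continuous T) (n : ℕ) {ε δ : ℝ}
    (hε : 0 < ε) (hδ : δ ∈ Ioo (0 : ℝ) 1) (ν : Measure X) [IsProbabilityMeasure ν] :
    ∃ E : Finset X, E.card = katokNum T ν n ε δ ∧
      ENNReal.ofReal (1 - δ) < ν (⋃ x ∈ E, {y | bowenDist T n x y < ε}) := by
  obtain ⟨E, hE⟩ := exists_span hT n hε
  exact Nat.sInf_mem (s := {k | ∃ E : Finset X, E.card = k ∧
    ENNReal.ofReal (1 - δ) < ν (⋃ x ∈ E, {y | bowenDist T n x y < ε})})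
    ⟨_, E, rfl, span_meas hδ ν hE⟩

open Classical in
/-- orbit segments of dense points -/
def imgD [Nonempty X] [TopologicalSpace.SeparableSpace X] (T : X → X) (F : Finset ℕ) :
    Finset (ℕ → X) :=
  F.image (fun k j => T^[j] (TopologicalSpace.denseSeq X k))

lemma log_quot {k n : ℕ} (hn : 0 < n) {s : ℝ} (hs : 0 ≤ s)
    (h : ENNReal.ofReal (Real.log k) / (n : ℝ≥0∞) ≤ ENNReal.ofReal s) :
    (k : ℝ) ≤ Real.exp (s * n) := by
  rw [ENNReal.div_le_iff (by positivity) (by simp), ← ENNReal.ofReal_natCast n,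
    ← ENNReal.ofReal_mul hs, ENNReal.ofReal_le_ofReal_iff (by positivity)] at h
  rcases Nat.eq_zero_or_pos k with h0 | h0
  · subst h0; simp [Real.exp_nonneg]
  · rwa [Real.log_le_iff_le_exp (by exact_mod_cast h0)] at h

lemma log_quot' {k n : ℕ} {s : ℝ} (hs : 0 ≤ s)
    (h : (k : ℝ) ≤ Real.exp (s * n)) (hn : 0 < n) :
    ENNReal.ofReal (Real.log k) / (n : ℝ≥0∞) ≤ ENNReal.ofReal s := by
  rw [ENNReal.div_le_iff (by positivity) (by simp), ← ENNReal.ofReal_natCast n,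
    ← ENNReal.ofReal_mul hs, ENNReal.ofReal_le_ofReal_iff (by positivity)]
  rcases Nat.eq_zero_or_pos k with h0 | h0
  · subst h0; simp; positivity
  · rwa [Real.log_le_iff_le_exp (by exact_mod_cast h0)]

lemma erg_cover [CompactSpace X] [Nonempty X] {T : X → X} (hT : Continuous T) {ε δ s : ℝ}
    (hε : 0 < ε) (hδ : δ ∈ Ioo (0 : ℝ) 1) (hs : 0 ≤ s) (ν : Measure X) [IsProbabilityMeasure ν]
    (h : katokLowerD T ν ε δ < ENNReal.ofReal s) (M : ℕ) :
    ∃ n ≥ M, ∃ F : Finset ℕ, (F.card : ℝ) ≤ Real.exp (s * n) ∧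
      1 - δ < ν.real (GG T (2 * ε) n (imgD T F)) := by
  classical
  have hf := frequently_lt_of_liminf_lt (by isBoundedDefault) h
  obtain ⟨n, hn, hnM⟩ := (hf.and_eventually (eventually_ge_atTop (M + 1))).exists
  refine ⟨n, by omega, ?_⟩
  have hc := log_quot (by omega) hs hn.le
  obtain ⟨E, hE1, hE2⟩ := katok_spec hT n hε hδ ν
  have hd : ∀ y : X, ∃ k, ∀ j < n, dist (T^[j] (TopologicalSpace.denseSeq X k)) (T^[j] y) < ε := by
    intro y
    obtain ⟨k, hk⟩ := (TopologicalSpace.denseRange_denseSeq X).exists_mem_open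
      (isOpen_shadow hT ε n (fun j => T^[j] y)) ⟨y, by simp [hε]⟩
    exact ⟨k, hk⟩
  choose f hf using hd
  refine ⟨E.image f, ?_, ?_⟩
  · refine le_trans ?_ hc
    rw [← hE1]
    exact_mod_cast Finset.card_image_le
  · rw [← ENNReal.ofReal_lt_ofReal_iff_of_nonneg (by linarith [hδ.2]), ofReal_measureReal]
    refine lt_of_lt_of_le hE2 (measure_mono ?_)
    intro z hz
    simp only [mem_iUnion, mem_setOf_eq] at hz
    obtain ⟨y, hy, h⟩ := hz
    rw [bowen_lt _ _ _ _ hε] at h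
    refine ⟨fun j => T^[j] (TopologicalSpace.denseSeq X (f y)), ?_, fun j hj => ?_⟩
    · unfold imgD
      exact Finset.mem_image_of_mem (fun k j => T^[j] (TopologicalSpace.denseSeq X k)) (Finset.mem_image_of_mem f hy)
    · have h1 := h j hj
      have h2 := hf y j hj
      have h3 := dist_triangle (T^[j] z) (T^[j] y) (T^[j] (TopologicalSpace.denseSeq X (f y)))
      rw [dist_comm] at h1 h2
      linarith
end MMDP

namespace MMDP

open ProbabilityTheory

variable {X : Type*} [MetricSpace X] [MeasurableSpace X] [BorelSpace X]

lemma ev_card (m : ℕ) {κ : ℝ} (hκ : 0 < κ) : ∀ᶠ N : ℕ in atTop, (m : ℝ) ≤ Real.exp (κ * N) := by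
  have : Tendsto (fun N : ℕ => Real.exp (κ * N)) atTop atTop :=
    Real.tendsto_exp_atTop.comp (tendsto_natCast_atTop_atTop.const_mul_atTop hκ)
  exact this.eventually_ge_atTop _

lemma exists_finite_ae {ι : Type*} [Countable ι] {μ : Measure X} [IsProbabilityMeasure μ]
    (W : ι → Set X) (hae : ∀ᵐ x ∂μ, ∃ i, x ∈ W i) {a : ℝ} (ha : a < 1) :
    ∃ J : Finset ι, a < μ.real (⋃ i ∈ J, W i) := by
  have h1 : μ (⋃ J : Finset ι, ⋃ i ∈ J, W i) = 1 := by
    rw [← Set.iUnion_eq_iUnion_finset]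
    rw [← measure_univ (μ := μ)]
    refine measure_congr ?_
    rw [eventuallyEq_univ]
    filter_upwards [hae] with x hx
    simpa using hx
  have hdir : Directed (· ⊆ ·) (fun J : Finset ι => ⋃ i ∈ J, W i) := by
    classical
    intro A B
    exact ⟨A ∪ B, biUnion_subset_biUnion_left (by simp), biUnion_subset_biUnion_left (by simp)⟩
  rw [hdir.measure_iUnion] at h1
  have h2 : ENNReal.ofReal a < ⨆ J : Finset ι, μ (⋃ i ∈ J, W i) := by
    rw [h1]; exact ENNReal.ofReal_lt_one.2 ha
  obtain ⟨J, hJ⟩ := lt_iSup_iff.1 h2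
  refine ⟨J, ?_⟩
  by_contra hcon
  rw [not_lt] at hcon
  have := ENNReal.ofReal_le_ofReal hcon
  rw [ofReal_measureReal (measure_ne_top _ _)] at this
  exact absurd hJ (not_lt.2 this)

theorem stepA [CompactSpace X] [Nonempty X] {T : X → X} (hT : Continuous T) {ε s : ℝ}
    (hε : 0 < ε) (hs : 0 ≤ s)
    (H : ∀ ν : Measure X, IsProbabilityMeasure ν → Ergodic T ν → ∀ δ ∈ Ioo (0 : ℝ) 1,
      katokLowerD T ν ε δ < ENNReal.ofReal s)
    {μ : Measure X} [IsProbabilityMeasure μ] (hμ : MeasurePreserving T μ μ) {η κ : ℝ}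
    (hη : 0 < η) (hκ : 0 < κ) (M : ℕ) :
    ∃ n ≥ M, ∃ E : Finset (ℕ → X), (E.card : ℝ) ≤ Real.exp ((s + κ) * n) ∧
      1 - η < μ.real (GG T (2 * ε) n E) := by
  classical
  obtain ⟨t, ht, M0, htile⟩ := tile T (r := 2 * ε) (by linarith) hs (half_pos hκ)
  set δ := min (t / 2) (1 / 2) with hδdef
  have hδ : δ ∈ Ioo (0 : ℝ) 1 :=
    ⟨lt_min (by linarith) (by norm_num), (min_le_right _ _).trans_lt (by norm_num)⟩
  let ι := {i : ℕ × Finset ℕ // M0 ≤ i.1 ∧ (i.2.card : ℝ) ≤ Real.exp (s * i.1)}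
  let G : ι → Set X := fun i => GG T (2 * ε) i.1.1 (imgD T i.1.2)
  have hG : ∀ i, MeasurableSet (G i) := fun i => (isOpen_GG hT _ _ _).measurableSet
  let K := condExpKernel μ (MeasurableSpace.invariants T)
  let W : ι → Set X := fun i => {x | 1 - δ < (K x).real (G i)}
  have hae : ∀ᵐ x ∂μ, ∃ i, x ∈ W i := by
    filter_upwards [ergodic_ker hμ] with x hx
    obtain ⟨n, hn, F, hF, h⟩ := erg_cover hT hε hδ hs (K x) (H _ inferInstance hx δ hδ) M0
    exact ⟨⟨(n, F), hn, hF⟩, h⟩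
  obtain ⟨J, hJ⟩ := exists_finite_ae W hae (a := 1 - η / 2) (by linarith)
  have hE : ∀ i : ι, ∃ N0 : ℕ, ∀ N ≥ N0, ∃ E' : Finset (ℕ → X),
        (E'.card : ℝ) ≤ Real.exp ((s + κ / 2) * N) ∧
        ∀ x, (bad T (G i) N x : ℝ) ≤ t * N → x ∈ GG T (2 * ε) N E' := by
    intro i
    refine htile i.1.1 i.2.1 _ (le_trans ?_ i.2.2)
    exact_mod_cast Finset.card_image_le
  choose N0 hN0 using hE
  let B : ι → ℕ → Set X := fun i N => {x | δ ≤ dist (fr T (G i) N x) ((K x).real (G i))}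
  have hB : ∀ i ∈ J, ∀ᶠ N in atTop, N0 i ≤ N ∧ μ.real (B i N) < η / (2 * (J.card + 1)) := by
    intro i _
    refine (eventually_ge_atTop _).and ?_
    have := tendstoInMeasure_iff_measureReal_dist.1 (mean_erg hμ (hG i)) δ hδ.1
    exact this.eventually_lt_const (by positivity)
  obtain ⟨N, hN1, hN2, hN3⟩ := (((Finset.eventually_all J).2 hB).and
    ((ev_card J.card (half_pos hκ)).and (eventually_ge_atTop M))).exists
  refine ⟨N, hN3, ?_⟩
  choose! E' hE'1 hE'2 using fun i (hi : i ∈ J) => hN0 i N (hN1 i hi).1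
  refine ⟨J.biUnion E', ?_, ?_⟩
  · calc ((J.biUnion E').card : ℝ) ≤ ∑ i ∈ J, ((E' i).card : ℝ) := by
          exact_mod_cast Finset.card_biUnion_le
      _ ≤ ∑ i ∈ J, Real.exp ((s + κ / 2) * N) := Finset.sum_le_sum hE'1
      _ = J.card * Real.exp ((s + κ / 2) * N) := by simp
      _ ≤ Real.exp (κ / 2 * N) * Real.exp ((s + κ / 2) * N) := by gcongr
      _ = Real.exp ((s + κ) * N) := by rw [← Real.exp_add]; congr 1; ring
  · have hsub : (⋃ i ∈ J, W i) ⊆ GG T (2 * ε) N (J.biUnion E') ∪ ⋃ i ∈ J, B i N := by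
      intro x hx
      simp only [mem_iUnion] at hx
      obtain ⟨i, hi, hx⟩ := hx
      by_cases hxB : x ∈ B i N
      · right
        simp only [mem_iUnion]
        exact ⟨i, hi, hxB⟩
      · left
        refine GG_mono T _ _ (Finset.subset_biUnion_of_mem E' hi) (hE'2 i hi x ?_)
        have h1 : dist (fr T (G i) N x) ((K x).real (G i)) < δ := not_le.1 hxB
        have h2 : 1 - δ < (K x).real (G i) := hx
        rw [Real.dist_eq, abs_lt] at h1
        rw [bad_fr, mul_comm]
        refine mul_le_mul_of_nonneg_right ?_ (Nat.cast_nonneg _)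
        have : δ ≤ t / 2 := min_le_left _ _
        linarith [h1.1]
    have h1 : μ.real (⋃ i ∈ J, W i) ≤ μ.real (GG T (2 * ε) N (J.biUnion E')) +
        μ.real (⋃ i ∈ J, B i N) :=
      (measureReal_mono hsub).trans (measureReal_union_le _ _)
    have h2 : μ.real (⋃ i ∈ J, B i N) ≤ η / 2 := by
      calc μ.real (⋃ i ∈ J, B i N) ≤ ∑ i ∈ J, μ.real (B i N) := measureReal_biUnion_finset_le _ _
        _ ≤ ∑ i ∈ J, η / (2 * (J.card + 1)) := Finset.sum_le_sum fun i hi => (hN1 i hi).2.le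
        _ = J.card * (η / (2 * (J.card + 1))) := by simp
        _ ≤ η / 2 := by
          rw [← mul_div_assoc, div_le_div_iff₀ (by positivity) (by norm_num)]
          nlinarith
    linarith
end MMDP

namespace MMDP

open BoundedContinuousFunction

variable {X : Type*} [MetricSpace X] [MeasurableSpace X] [BorelSpace X]

lemma emp_prob (T : X → X) {N : ℕ} (hN : 0 < N) (x : X) : IsProbabilityMeasure (empMeas T N x) := by
  refine ⟨?_⟩
  unfold empMeas
  simp only [Measure.smul_apply, Measure.coe_finsetSum, Finset.sum_apply, measure_univ,
    Finset.sum_const, Finset.card_range, nsmul_eq_mul, mul_one, smul_eq_mul]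
  exact ENNReal.inv_mul_cancel (by simpa using hN.ne') (by simp)

open Classical in
/-- empirical measure as a probability measure -/
def empP (T : X → X) (N : ℕ) (x : X) : ProbabilityMeasure X :=
  if h : 0 < N then ⟨empMeas T N x, emp_prob T h x⟩ else ⟨Measure.dirac x, inferInstance⟩

lemma empP_coe (T : X → X) {N : ℕ} (hN : 0 < N) (x : X) :
    (empP T N x : Measure X) = empMeas T N x := by
  simp [empP, hN]

lemma empP_integral (T : X → X) {N : ℕ} (hN : 0 < N) (x : X) (f : X →ᵇ ℝ) :
    ∫ y, f y ∂(empP T N x : Measure X) = (N : ℝ)⁻¹ * ∑ j ∈ Finset.range N, f (T^[j] x) := by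
  rw [empP_coe T hN, empMeas, integral_smul_measure, integral_finsetSum_measure]
  · simp
  · intro j _
    exact f.integrable _

lemma empP_real (T : X → X) {N : ℕ} (hN : 0 < N) (x : X) {G : Set X} (hG : MeasurableSet G) :
    (empP T N x : Measure X).real G = fr T G N x := by
  classical
  rw [empP_coe T hN, empMeas, fr, measureReal_def]
  simp only [Measure.smul_apply, Measure.coe_finsetSum, Finset.sum_apply, smul_eq_mul,
    ENNReal.toReal_mul, Measure.dirac_apply' _ hG]
  rw [ENNReal.toReal_sum]
  · congr 1
    · simp
    · refine Finset.sum_congr rfl fun j _ => ?_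
      by_cases h : T^[j] x ∈ G <;> simp [h]
  · intro j _
    by_cases h : T^[j] x ∈ G <;> simp [h]

lemma isOpen_big (G : Set X) (hG : IsOpen G) (a : ℝ≥0∞) :
    IsOpen {ν : ProbabilityMeasure X | a < (ν : Measure X) G} := by
  rw [isOpen_iff_eventually]
  intro μ hμ
  have := ProbabilityMeasure.le_liminf_measure_open_of_tendsto (L := 𝓝 μ) (μs := id)
    tendsto_id hG
  exact eventually_lt_of_lt_liminf (lt_of_lt_of_le hμ this)

variable [CompactSpace X]

lemma emp_lim {T : X → X} (hT : Continuous T) (𝓕 : Filter ℕ) [𝓕.NeBot] (h𝓕 : 𝓕 ≤ atTop)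
    (x : ℕ → X) {μ : ProbabilityMeasure X}
    (hlim : Tendsto (fun N => empP T N (x N)) 𝓕 (𝓝 μ)) :
    (μ : Measure X).map T = μ := by
  have hTm := hT.measurable
  haveI : IsProbabilityMeasure ((μ : Measure X).map T) :=
    Measure.isProbabilityMeasure_map hTm.aemeasurable
  refine ext_of_forall_integral_eq_of_IsFiniteMeasure fun f => ?_
  rw [integral_map hTm.aemeasurable f.continuous.aestronglyMeasurable]
  let g : X →ᵇ ℝ := f.compContinuous ⟨T, hT⟩
  have h1 := ProbabilityMeasure.tendsto_iff_forall_integral_tendsto.1 hlim f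
  have h2 := ProbabilityMeasure.tendsto_iff_forall_integral_tendsto.1 hlim g
  have h3 := h2.sub h1
  have h4 : Tendsto (fun N => ∫ ω, g ω ∂(empP T N (x N) : Measure X) -
      ∫ ω, f ω ∂(empP T N (x N) : Measure X)) 𝓕 (𝓝 0) := by
    have hz : Tendsto (fun N : ℕ => (N : ℝ)⁻¹ * (2 * ‖f‖)) 𝓕 (𝓝 0) := by
      have : Tendsto (fun N : ℕ => (N : ℝ)⁻¹ * (2 * ‖f‖)) atTop (𝓝 (0 * (2 * ‖f‖))) :=
        (tendsto_inv_atTop_nhds_zero_nat (𝕜 := ℝ)).mul_const _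
      rw [zero_mul] at this
      exact this.mono_left h𝓕
    refine squeeze_zero_norm' ?_ hz
    filter_upwards [h𝓕 (eventually_gt_atTop 0)] with N hN
    rw [empP_integral T hN, empP_integral T hN, ← mul_sub, ← Finset.sum_sub_distrib]
    have : ∀ j, g (T^[j] (x N)) = f (T^[j + 1] (x N)) := by
      intro j
      rw [Function.iterate_succ_apply']
      rfl
    simp only [this]
    rw [Finset.sum_range_sub (fun j => f (T^[j] (x N))), norm_mul, norm_inv, Real.norm_natCast]
    gcongr
    calc _ ≤ ‖f (T^[N] (x N))‖ + ‖f (T^[0] (x N))‖ := norm_sub_le _ _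
      _ ≤ ‖f‖ + ‖f‖ := add_le_add (f.norm_coe_le_norm _) (f.norm_coe_le_norm _)
      _ = 2 * ‖f‖ := by ring
  have h5 := tendsto_nhds_unique h3 h4
  exact sub_eq_zero.1 h5

lemma emp_ev [Nonempty X] {T : X → X} (hT : Continuous T) (U : Set (ProbabilityMeasure X))
    (hU : IsOpen U) (h : ∀ μ : ProbabilityMeasure X, (μ : Measure X).map T = μ → μ ∈ U) :
    ∀ᶠ N in atTop, ∀ x, empP T N x ∈ U := by
  by_contra hcon
  have hcon : ∃ᶠ N in atTop, ∃ x, empP T N x ∉ U := by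
    simpa [Filter.Frequently] using hcon
  have : ∃ x : ℕ → X, ∃ᶠ N in atTop, empP T N (x N) ∉ U := by
    let x : ℕ → X := fun N => Classical.epsilon (fun y => empP T N y ∉ U)
    exact ⟨x, hcon.mono fun N hN => Classical.epsilon_spec hN⟩
  obtain ⟨x, hx⟩ := this
  haveI : (atTop ⊓ 𝓟 {N | empP T N (x N) ∉ U}).NeBot := frequently_mem_iff_neBot.1 hx
  let 𝓕 := Ultrafilter.of (atTop ⊓ 𝓟 {N | empP T N (x N) ∉ U})
  have h𝓕 : (𝓕 : Filter ℕ) ≤ atTop ⊓ 𝓟 {N | empP T N (x N) ∉ U} := Ultrafilter.of_le _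
  obtain ⟨μ, -, hμ⟩ := (isCompact_univ (X := ProbabilityMeasure X)).ultrafilter_le_nhds
    (𝓕.map (fun N => empP T N (x N))) (by simp)
  have hlim : Tendsto (fun N => empP T N (x N)) (𝓕 : Filter ℕ) (𝓝 μ) := hμ
  have hinv := emp_lim hT 𝓕 (h𝓕.trans inf_le_left) x hlim
  have h1 := hlim.eventually (hU.mem_nhds (h μ hinv))
  have h2 : ∀ᶠ N in (𝓕 : Filter ℕ), empP T N (x N) ∉ U :=
    h𝓕.trans inf_le_right (mem_principal_self _)
  obtain ⟨N, h3, h4⟩ := (h1.and h2).exists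
  exact h4 h3

lemma inv_compact {T : X → X} (hT : Continuous T) :
    IsCompact {μ : ProbabilityMeasure X | (μ : Measure X).map T = μ} := by
  have : {μ : ProbabilityMeasure X | (μ : Measure X).map T = μ} =
      {μ : ProbabilityMeasure X | μ.map hT.measurable.aemeasurable = μ} := by
    ext μ
    change (μ : Measure X).map T = μ ↔ μ.map hT.measurable.aemeasurable = μ
    exact ⟨fun h => Subtype.ext h, fun h => congrArg (fun ν : ProbabilityMeasure X => (ν : Measure X)) h⟩
  rw [this]
  exact (isClosed_eq (ProbabilityMeasure.continuous_map hT) continuous_id).isCompact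

theorem stepB [Nonempty X] {T : X → X} (hT : Continuous T) {r c κ : ℝ} (hr : 0 < r) (hc : 0 ≤ c)
    (hκ : 0 < κ)
    (H : ∀ μ : Measure X, IsProbabilityMeasure μ → MeasurePreserving T μ μ → ∀ η : ℝ, 0 < η →
      ∀ M : ℕ, ∃ n ≥ M, ∃ E : Finset (ℕ → X), (E.card : ℝ) ≤ Real.exp (c * n) ∧
      1 - η < μ.real (GG T r n E)) :
    ∀ᶠ N : ℕ in atTop, (spanNum T N (2 * r) univ : ℝ) ≤ Real.exp ((c + κ) * N) := by
  classical
  obtain ⟨t, ht, M0, htile⟩ := tile T (r := r) hr hc (half_pos hκ)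
  set η := min t (1 / 2) with hηdef
  have hη : 0 < η := lt_min ht (by norm_num)
  have hη1 : η ≤ 1 / 2 := min_le_right _ _
  have hH : ∀ μ : ProbabilityMeasure X, (μ : Measure X).map T = μ → ∃ n ≥ M0,
      ∃ E : Finset (ℕ → X), (E.card : ℝ) ≤ Real.exp (c * n) ∧
      ENNReal.ofReal (1 - η) < (μ : Measure X) (GG T r n E) := by
    intro μ hμ
    obtain ⟨n, hn, E, h1, h2⟩ := H μ inferInstance ⟨hT.measurable, hμ⟩ η hη M0
    refine ⟨n, hn, E, h1, ?_⟩
    rwa [← ENNReal.ofReal_lt_ofReal_iff_of_nonneg (by linarith),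
      ofReal_measureReal (measure_ne_top _ _)] at h2
  choose! n hn E hE1 hE2 using hH
  let V : ProbabilityMeasure X → Set (ProbabilityMeasure X) := fun μ =>
    {ν | ENNReal.ofReal (1 - η) < (ν : Measure X) (GG T r (n μ) (E μ))}
  have hV : ∀ μ, IsOpen (V μ) := fun μ => isOpen_big _ (isOpen_GG hT _ _ _) _
  obtain ⟨J, hJ1, hJ2⟩ := (inv_compact hT).elim_nhds_subcover V
    (fun μ hμ => (hV μ).mem_nhds (hE2 μ hμ))
  have hev := emp_ev hT (⋃ μ ∈ J, V μ) (isOpen_biUnion fun μ _ => hV μ) (fun μ hμ => hJ2 hμ)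
  choose! N0 hN0 using fun μ (hμ : μ ∈ J) => htile (n μ) (hn μ (hJ1 μ hμ)) (E μ) (hE1 μ (hJ1 μ hμ))
  have hge : ∀ᶠ N in atTop, ∀ μ ∈ J, N0 μ ≤ N :=
    (Finset.eventually_all J).2 fun μ _ => eventually_ge_atTop _
  filter_upwards [hev, hge, ev_card J.card (half_pos hκ), eventually_gt_atTop 0]
    with N h1 h2 h3 h4
  choose! E' hE'1 hE'2 using fun μ (hμ : μ ∈ J) => hN0 μ hμ N (h2 μ hμ)
  have hcard : ((J.biUnion E').card : ℝ) ≤ Real.exp ((c + κ) * N) := by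
    calc ((J.biUnion E').card : ℝ) ≤ ∑ i ∈ J, ((E' i).card : ℝ) := by
          exact_mod_cast Finset.card_biUnion_le
      _ ≤ ∑ i ∈ J, Real.exp ((c + κ / 2) * N) := Finset.sum_le_sum hE'1
      _ = J.card * Real.exp ((c + κ / 2) * N) := by simp
      _ ≤ Real.exp (κ / 2 * N) * Real.exp ((c + κ / 2) * N) := by gcongr
      _ = Real.exp ((c + κ) * N) := by rw [← Real.exp_add]; congr 1; ring
  have hcov : ∀ x, x ∈ GG T r N (J.biUnion E') := by
    intro x
    have := h1 x
    simp only [mem_iUnion] at this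
    obtain ⟨μ, hμ, hx⟩ := this
    refine GG_mono T _ _ (Finset.subset_biUnion_of_mem E' hμ) (hE'2 μ hμ x ?_)
    have hx' : 1 - η < fr T (GG T r (n μ) (E μ)) N x := by
      rw [← empP_real T h4 x (isOpen_GG hT _ _ _).measurableSet]
      have hx2 : ENNReal.ofReal (1 - η) < (empP T N x : Measure X) (GG T r (n μ) (E μ)) := hx
      rwa [← ENNReal.ofReal_lt_ofReal_iff_of_nonneg (by linarith),
        ofReal_measureReal (measure_ne_top _ _)]
    rw [bad_fr, mul_comm]
    refine mul_le_mul_of_nonneg_right ?_ (Nat.cast_nonneg _)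
    have : η ≤ t := min_le_left _ _
    linarith
  let rep : (ℕ → X) → X := fun z => Classical.epsilon (fun x => ∀ j < N, dist (T^[j] x) (z j) < r)
  refine le_trans ?_ hcard
  have hle : spanNum T N (2 * r) univ ≤ ((J.biUnion E').image rep).card := by
    refine Nat.sInf_le ⟨_, rfl, fun x _ => ?_⟩
    obtain ⟨z, hz, hx⟩ := hcov x
    refine ⟨rep z, Finset.mem_image_of_mem rep hz, ?_⟩
    have hrep : ∀ j < N, dist (T^[j] (rep z)) (z j) < r :=
      Classical.epsilon_spec (p := fun x => ∀ j < N, dist (T^[j] x) (z j) < r) ⟨x, hx⟩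
    rw [bowen_lt _ _ _ _ (by linarith)]
    intro j hj
    have := dist_triangle_right (T^[j] x) (T^[j] (rep z)) (z j)
    linarith [hx j hj, hrep j hj]
  exact_mod_cast hle.trans Finset.card_image_le
end MMDP

namespace MMDP

variable {X : Type*} [MetricSpace X] [CompactSpace X] [MeasurableSpace X] [BorelSpace X]

/-- supremum of lower Katok entropies over ergodic measures -/
def SL (T : X → X) (ε : ℝ) : ℝ≥0∞ :=
  ⨆ (μ : Measure X) (_ : IsProbabilityMeasure μ) (_ : Ergodic T μ), katokLower T μ ε

/-- supremum of upper Katok entropies over ergodic measures -/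
def SU (T : X → X) (ε : ℝ) : ℝ≥0∞ :=
  ⨆ (μ : Measure X) (_ : IsProbabilityMeasure μ) (_ : Ergodic T μ), katokUpper T μ ε

lemma SL_le_SU (T : X → X) (ε : ℝ) : SL T ε ≤ SU T ε := by
  refine iSup_mono fun μ => iSup_mono fun _ => iSup_mono fun _ => ?_
  refine iSup_mono fun δ => iSup_mono fun _ => ?_
  exact liminf_le_limsup

lemma SU_le {T : X → X} (hT : Continuous T) {ε : ℝ} (hε : 0 < ε) : SU T ε ≤ spanGrowth T ε := by
  refine iSup_le fun μ => iSup_le fun hμ => iSup_le fun _ => iSup_le fun δ => iSup_le fun hδ => ?_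
  refine limsup_le_limsup (Eventually.of_forall fun n => ?_)
  refine ENNReal.div_le_div_right (ENNReal.ofReal_le_ofReal ?_) _
  have h := katok_le_span hT n hε hδ μ
  rcases Nat.eq_zero_or_pos (katokNum T μ n ε δ) with h0 | h0
  · rw [h0, Nat.cast_zero, Real.log_zero]
    exact Real.log_natCast_nonneg _
  · exact Real.log_le_log (by exact_mod_cast h0) (by exact_mod_cast h)

lemma spanGrowth_le {T : X → X} (hT : Continuous T) {ε : ℝ} (hε : 0 < ε) :
    spanGrowth T (2 * (2 * ε)) ≤ SL T ε := by
  rcases isEmpty_or_nonempty X with hX | hX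
  · have : ∀ n, spanNum T n (2 * (2 * ε)) univ = 0 := by
      intro n
      refine Nat.sInf_eq_zero.2 (Or.inl ⟨∅, rfl, fun z => (hX.false z).elim⟩)
    simp [spanGrowth, this]
  refine ENNReal.le_of_forall_pos_le_add fun κ hκ hfin => ?_
  have hκ' : (0 : ℝ) < κ := hκ
  set S := (SL T ε).toReal with hS
  have hS0 : 0 ≤ S := ENNReal.toReal_nonneg
  have hSS : SL T ε = ENNReal.ofReal S := (ENNReal.ofReal_toReal hfin.ne).symm
  have hlt : SL T ε < ENNReal.ofReal (S + κ / 3) := by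
    rw [hSS]
    exact (ENNReal.ofReal_lt_ofReal_iff (by positivity)).2 (by linarith)
  have H : ∀ ν : Measure X, IsProbabilityMeasure ν → Ergodic T ν → ∀ δ ∈ Ioo (0 : ℝ) 1,
      katokLowerD T ν ε δ < ENNReal.ofReal (S + κ / 3) := by
    intro ν h1 h2 δ hδ
    refine lt_of_le_of_lt ?_ hlt
    refine le_trans ?_ (le_iSup_of_le ν (le_iSup_of_le h1 (le_iSup_of_le h2 le_rfl)))
    exact le_iSup_of_le δ (le_iSup_of_le hδ le_rfl)
  have hB := stepB hT (r := 2 * ε) (c := S + κ / 3 + κ / 3) (κ := κ / 3) (by linarith)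
    (by positivity) (by positivity)
    (fun μ hμ hinv η hη M => stepA hT hε (by positivity) H hinv hη (by positivity) M)
  have : SL T ε + κ = ENNReal.ofReal (S + κ / 3 + κ / 3 + κ / 3) := by
    rw [hSS, ← ENNReal.ofReal_coe_nnreal, ← ENNReal.ofReal_add hS0 hκ'.le]
    congr 1; ring
  rw [this]
  refine limsup_le_of_le (by isBoundedDefault) ?_
  filter_upwards [hB, eventually_gt_atTop 0] with n h1 h2
  exact log_quot' (by positivity) h1 h2

lemma tendsto_quarter : Tendsto (fun ε : ℝ => ε / 4) (𝓝[>] 0) (𝓝[>] 0) := by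
  refine tendsto_nhdsWithin_iff.2 ⟨?_, ?_⟩
  · have : Tendsto (fun ε : ℝ => ε / 4) (𝓝 0) (𝓝 (0 / 4)) := tendsto_id.div_const 4
    rw [zero_div] at this
    exact this.mono_left nhdsWithin_le_nhds
  · filter_upwards [self_mem_nhdsWithin] with ε hε
    have hε : 0 < ε := hε
    exact show 0 < ε / 4 by positivity

lemma limsup_aux (A S : ℝ → ℝ≥0∞) (h : ∀ ε, 0 < ε → A (2 * (2 * ε)) ≤ S ε) :
    limsup (fun ε : ℝ => A ε / ENNReal.ofReal (Real.log (1 / ε))) (𝓝[>] 0) ≤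
    limsup (fun ε : ℝ => S ε / ENNReal.ofReal (Real.log (1 / ε))) (𝓝[>] 0) := by
  set g : ℝ → ℝ≥0∞ := fun ε => S ε / ENNReal.ofReal (Real.log (1 / ε)) with hg
  have key : ∀ a : ℝ, 1 < a →
      limsup (fun ε : ℝ => A ε / ENNReal.ofReal (Real.log (1 / ε))) (𝓝[>] 0) ≤
      ENNReal.ofReal a * limsup g (𝓝[>] 0) := by
    intro a ha
    have h1 : limsup (fun ε => g (ε / 4)) (𝓝[>] 0) ≤ limsup g (𝓝[>] 0) := by
      have := limsup_le_limsup_of_le (u := g) tendsto_quarter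
      exact this
    refine le_trans ?_ (mul_le_mul_right h1 _)
    rw [← ENNReal.limsup_const_mul_of_ne_top ENNReal.ofReal_ne_top]
    refine limsup_le_limsup ?_
    have hlog : Tendsto (fun ε : ℝ => Real.log (1 / ε)) (𝓝[>] 0) atTop := by
      simp only [one_div]
      exact Real.tendsto_log_atTop.comp tendsto_inv_nhdsGT_zero
    filter_upwards [self_mem_nhdsWithin, hlog.eventually_gt_atTop 0,
      hlog.eventually_ge_atTop (Real.log 4 / (a - 1))] with ε hε hl1 hl2
    have hε : 0 < ε := hε
    have hl4 : Real.log (1 / (ε / 4)) = Real.log 4 + Real.log (1 / ε) := by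
      rw [← Real.log_mul (by norm_num) (by positivity)]
      congr 1; field_simp
    have h4 : 0 < Real.log 4 := Real.log_pos (by norm_num)
    have hA : A ε ≤ S (ε / 4) := by
      have := h (ε / 4) (by positivity)
      rwa [show 2 * (2 * (ε / 4)) = ε by ring] at this
    simp only [hg]
    rw [hl4]
    set l := Real.log (1 / ε) with hl
    rw [div_le_iff₀ (by linarith)] at hl2
    rw [div_eq_mul_inv, div_eq_mul_inv, ← ENNReal.ofReal_inv_of_pos hl1,
      ← ENNReal.ofReal_inv_of_pos (by linarith), mul_left_comm,
      ← ENNReal.ofReal_mul (by linarith)]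
    refine mul_le_mul' hA (ENNReal.ofReal_le_ofReal ?_)
    rw [← div_eq_mul_inv, inv_eq_one_div, div_le_div_iff₀ hl1 (by linarith)]
    linarith
  have hlim : Tendsto (fun k : ℕ => ENNReal.ofReal (1 + 1 / ((k : ℝ) + 1)) * limsup g (𝓝[>] 0))
      atTop (𝓝 (1 * limsup g (𝓝[>] 0))) := by
    refine ENNReal.Tendsto.mul_const ?_ (Or.inl one_ne_zero)
    have : Tendsto (fun k : ℕ => 1 + 1 / ((k : ℝ) + 1)) atTop (𝓝 (1 + 0)) :=
      tendsto_const_nhds.add tendsto_one_div_add_atTop_nhds_zero_nat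
    rw [add_zero] at this
    simpa using ENNReal.tendsto_ofReal this
  rw [one_mul] at hlim
  exact ge_of_tendsto' hlim fun k => key _ (by
    have : 0 < 1 / ((k : ℝ) + 1) := by positivity
    linarith)

end MMDP

/-- Theorem 3.3 (upper part): variational principles for the upper metric mean dimension in
terms of the lower and upper Katok entropies, over ergodic measures. -/
theorem stmt5 {X : Type*} [MetricSpace X] [CompactSpace X] [MeasurableSpace X] [BorelSpace X]
    (T : X → X) (hT : Continuous T) :
    mdimMUpper T = Filter.limsup (fun ε : ℝ =>
        (⨆ (μ : Measure X) (_ : IsProbabilityMeasure μ) (_ : Ergodic T μ), katokLower T μ ε)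
          / ENNReal.ofReal (Real.log (1 / ε))) (nhdsWithin 0 (Set.Ioi 0)) ∧
    mdimMUpper T = Filter.limsup (fun ε : ℝ =>
        (⨆ (μ : Measure X) (_ : IsProbabilityMeasure μ) (_ : Ergodic T μ), katokUpper T μ ε)
          / ENNReal.ofReal (Real.log (1 / ε))) (nhdsWithin 0 (Set.Ioi 0)) := by
  have h1 : mdimMUpper T ≤ Filter.limsup (fun ε : ℝ =>
      MMDP.SL T ε / ENNReal.ofReal (Real.log (1 / ε))) (nhdsWithin 0 (Set.Ioi 0)) :=
    MMDP.limsup_aux _ _ fun ε hε => MMDP.spanGrowth_le hT hε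
  have h2 : Filter.limsup (fun ε : ℝ =>
      MMDP.SL T ε / ENNReal.ofReal (Real.log (1 / ε))) (nhdsWithin 0 (Set.Ioi 0)) ≤
      Filter.limsup (fun ε : ℝ =>
      MMDP.SU T ε / ENNReal.ofReal (Real.log (1 / ε))) (nhdsWithin 0 (Set.Ioi 0)) :=
    Filter.limsup_le_limsup (Filter.Eventually.of_forall fun ε =>
      ENNReal.div_le_div_right (MMDP.SL_le_SU T ε) _)
  have h3 : Filter.limsup (fun ε : ℝ =>
      MMDP.SU T ε / ENNReal.ofReal (Real.log (1 / ε))) (nhdsWithin 0 (Set.Ioi 0)) ≤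
      mdimMUpper T := by
    refine Filter.limsup_le_limsup ?_
    filter_upwards [self_mem_nhdsWithin] with ε hε
    exact ENNReal.div_le_div_right (MMDP.SU_le hT hε) _
  exact ⟨le_antisymm h1 (h2.trans h3), le_antisymm (h1.trans h2) h3⟩
end
end
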